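/- arXiv:2103.13857 — 6 statements merged into one kernel-verified Lean document; each statement's English description precedes it below -/
import Mathlib

section
/- Let n ≥ 2, let f : S^{n-1} → ℝ satisfy f(ω) ≥ f₀ for all ω, where f₀ > 0, and suppose f is geodesically L-Lipschitz. Then the domain Ω_f is star-shaped with respect to the ball B_ε(0) with ε = f₀²/(Lπ + f₀); that is, for every y ∈ ℝⁿ with ‖y‖ < ε and every x ∈ Ω_f, the segment [y,x] = {y + t(x−y) : t ∈ [0,1]} is contained in Ω_f. -/
open Real
open scoped RealInnerProductSpace

/-- The star-shaped domain associated to a positive function on the unit sphere: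
`Ω_f = {x : x = 0, or x ≠ 0 and ‖x‖ < f(x/‖x‖)}`. -/
def Omega {n : ℕ} (f : EuclideanSpace ℝ (Fin n) → ℝ) : Set (EuclideanSpace ℝ (Fin n)) :=
  {x | x = 0 ∨ (x ≠ 0 ∧ ‖x‖ < f (‖x‖⁻¹ • x))}

/-!
Let `z` lie on the segment from `y` to `x`, and let `α` be the angle between `z` and `x - z`.
The line through `y` and `x` has distance `‖z‖ sin α` from the origin, so a small `‖y‖` makes the
line steep: `L tan α ≤ ‖z‖`. Going from `z` to `x` therefore raises the norm by at least `L` times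
the angle swept out, hence by at least as much as `f` can grow, and `‖x‖ < f(x/‖x‖)` is inherited
by `z`. Steepness is needed only where `‖z‖ ≥ f₀`, and there the critical distance is
`f₀² / √(L² + f₀²)`, which is at least `f₀² / (Lπ + f₀)`.
-/

open InnerProductGeometry

lemma mul_sin_le_mul_cos_of_mul_sin_le {L c r θ : ℝ} (hc : 0 < c) (hcr : c ≤ r) (h_sin : 0 ≤ sin θ)
    (h_cos : 0 ≤ cos θ) (h : r * sin θ ≤ c ^ 2 / √(L ^ 2 + c ^ 2)) :
    L * sin θ ≤ r * cos θ := by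
  have sqrt_pos : 0 < √(L ^ 2 + c ^ 2) := by positivity
  have sin_le : √(L ^ 2 + c ^ 2) * sin θ ≤ c := by
    refine le_of_mul_le_mul_left ?_ hc
    rw [le_div_iff₀ sqrt_pos] at h
    calc c * (√(L ^ 2 + c ^ 2) * sin θ) = c * sin θ * √(L ^ 2 + c ^ 2) := by ring
      _ ≤ r * sin θ * √(L ^ 2 + c ^ 2) := by gcongr
      _ ≤ c * c := by rwa [← sq]
  have sq_le : (L * sin θ) ^ 2 ≤ (c * cos θ) ^ 2 := by
    have h_sq : (L ^ 2 + c ^ 2) * sin θ ^ 2 ≤ c ^ 2 := by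
      rw [← sq_sqrt (by positivity : 0 ≤ L ^ 2 + c ^ 2), ← mul_pow]
      gcongr
    linear_combination h_sq - c ^ 2 * sin_sq_add_cos_sq θ
  calc L * sin θ ≤ c * cos θ := le_of_sq_le_sq sq_le (by positivity)
    _ ≤ r * cos θ := by gcongr

lemma sq_div_sqrt_sq_add_sq_le {c : ℝ} (hc : 0 ≤ c) (L : ℝ) : c ^ 2 / √(L ^ 2 + c ^ 2) ≤ c := by
  refine div_le_of_le_mul₀ (sqrt_nonneg _) hc ?_
  calc c ^ 2 = c * c := sq c
    _ ≤ c * √(L ^ 2 + c ^ 2) := by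
        gcongr
        exact le_sqrt_of_sq_le (le_add_of_nonneg_left (sq_nonneg L))

lemma sqrt_sq_add_sq_le_add {a b : ℝ} (ha : 0 ≤ a) (hb : 0 ≤ b) : √(a ^ 2 + b ^ 2) ≤ a + b :=
  sqrt_le_iff.2 ⟨by positivity, by linarith [add_sq a b, mul_nonneg ha hb]⟩

lemma sq_div_mul_pi_add_le_sq_div_sqrt {L c : ℝ} (hL : 0 ≤ L) (hc : 0 < c) :
    c ^ 2 / (L * π + c) ≤ c ^ 2 / √(L ^ 2 + c ^ 2) := by
  gcongr
  calc √(L ^ 2 + c ^ 2) ≤ L + c := sqrt_sq_add_sq_le_add hL hc.le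
    _ ≤ L * π + c := by
        gcongr
        exact le_mul_of_one_le_right hL (by linarith [pi_gt_three])

section InnerProductSpace

variable {E : Type*} [NormedAddCommGroup E] [InnerProductSpace ℝ E]

lemma norm_mul_sin_angle_le_norm_sub_smul (z v : E) (s : ℝ) :
    ‖z‖ * sin (angle z v) ≤ ‖z - s • v‖ := by
  have expand : ‖z - s • v‖ ^ 2 =
      (‖z‖ * sin (angle z v)) ^ 2 + (‖z‖ * cos (angle z v) - s * ‖v‖) ^ 2 := by
    rw [norm_sub_sq_real, real_inner_smul_right, ← cos_angle_mul_norm_mul_norm, norm_smul,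
      mul_pow, norm_eq_abs, sq_abs]
    linear_combination -‖z‖ ^ 2 * sin_sq_add_cos_sq (angle z v)
  refine le_of_sq_le_sq ?_ (norm_nonneg _)
  rw [expand]
  exact le_add_of_nonneg_right (sq_nonneg _)

lemma cos_angle_pos_of_norm_sub_smul_lt {z v : E} {s : ℝ} (hs : 0 ≤ s)
    (h : ‖z - s • v‖ < ‖z‖) : 0 < cos (angle z v) := by
  have h_inner : 0 < s * ⟪z, v⟫ := by
    have h_sq : ‖z - s • v‖ ^ 2 < ‖z‖ ^ 2 := by gcongr
    rw [norm_sub_sq_real, real_inner_smul_right] at h_sq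
    linarith [sq_nonneg ‖s • v‖]
  rw [← cos_angle_mul_norm_mul_norm] at h_inner
  exact pos_of_mul_pos_left (pos_of_mul_pos_right h_inner hs) (by positivity)

lemma norm_add_norm_mul_cos_angle (z w : E) :
    ‖z‖ + ‖w‖ * cos (angle z w) = ‖z + w‖ * cos (angle z (z + w)) := by
  rcases eq_or_ne z 0 with rfl | hz
  · simp
  have h_inner := inner_add_right (𝕜 := ℝ) z z w
  rw [real_inner_self_eq_norm_sq, ← cos_angle_mul_norm_mul_norm,
    ← cos_angle_mul_norm_mul_norm] at h_inner
  refine mul_left_cancel₀ (norm_ne_zero_iff.2 hz) ?_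
  linear_combination -h_inner

lemma norm_add_mul_sin_angle (z w : E) :
    ‖z + w‖ * sin (angle z (z + w)) = ‖w‖ * sin (angle z w) := by
  have law_of_sines := sin_angle_mul_norm_eq_sin_angle_mul_norm (z + w) z
  rwa [add_sub_cancel_left, angle_comm, mul_comm, mul_comm (sin _)] at law_of_sines

lemma norm_mul_angle_add_le {z w : E} (h : 0 ≤ cos (angle z w)) :
    ‖z‖ * angle z (z + w) ≤ ‖w‖ * sin (angle z w) := by
  rcases eq_or_ne z 0 with rfl | hz
  · simp
  set θ := angle z (z + w) with hθ
  have norm_le : ‖z‖ ≤ ‖z + w‖ * cos θ := by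
    rw [hθ, ← norm_add_norm_mul_cos_angle]
    exact le_add_of_nonneg_right (by positivity)
  have cos_pos : 0 < cos θ :=
    pos_of_mul_pos_right ((norm_pos_iff.2 hz).trans_le norm_le) (norm_nonneg _)
  have θ_lt : θ < π / 2 := by
    by_contra! hle
    have θ_le : θ ≤ π + π / 2 := by linarith [angle_le_pi z (z + w), pi_pos]
    exact cos_pos.not_ge (cos_nonpos_of_pi_div_two_le_of_le hle θ_le)
  calc ‖z‖ * θ ≤ ‖z + w‖ * cos θ * tan θ :=
        mul_le_mul norm_le (le_tan (angle_nonneg _ _) θ_lt) (angle_nonneg _ _) (by positivity)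
    _ = ‖z + w‖ * sin θ := by rw [mul_assoc, mul_comm (cos θ), tan_mul_cos cos_pos.ne']
    _ = ‖w‖ * sin (angle z w) := norm_add_mul_sin_angle z w

lemma norm_add_mul_angle_le_norm_add {z w : E} {L : ℝ} (hL : 0 ≤ L) (hz : z ≠ 0)
    (h_steep : L * sin (angle z w) ≤ ‖z‖ * cos (angle z w)) :
    ‖z‖ + L * angle z (z + w) ≤ ‖z + w‖ := by
  have hz_pos : 0 < ‖z‖ := norm_pos_iff.2 hz
  have cos_nonneg : 0 ≤ cos (angle z w) :=
    nonneg_of_mul_nonneg_right ((mul_nonneg hL (sin_angle_nonneg z w)).trans h_steep) hz_pos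
  have radial_gain : ‖w‖ * cos (angle z w) ≤ ‖z + w‖ - ‖z‖ := by
    rw [le_sub_iff_add_le', norm_add_norm_mul_cos_angle]
    exact mul_le_of_le_one_right (norm_nonneg _) (cos_le_one _)
  suffices L * angle z (z + w) ≤ ‖z + w‖ - ‖z‖ by linarith
  refine le_of_mul_le_mul_left ?_ hz_pos
  calc ‖z‖ * (L * angle z (z + w)) = L * (‖z‖ * angle z (z + w)) := by ring
    _ ≤ L * (‖w‖ * sin (angle z w)) :=
        mul_le_mul_of_nonneg_left (norm_mul_angle_add_le cos_nonneg) hL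
    _ = ‖w‖ * (L * sin (angle z w)) := by ring
    _ ≤ ‖w‖ * (‖z‖ * cos (angle z w)) := by gcongr
    _ = ‖z‖ * (‖w‖ * cos (angle z w)) := by ring
    _ ≤ ‖z‖ * (‖z + w‖ - ‖z‖) := by gcongr

lemma norm_add_mul_angle_le_norm_of_mem_segment {x y z : E} {c L : ℝ} (hc : 0 < c) (hL : 0 ≤ L)
    (hy : ‖y‖ < c ^ 2 / √(L ^ 2 + c ^ 2)) (hz : z ∈ segment ℝ y x) (hcz : c ≤ ‖z‖) :
    ‖z‖ + L * angle z x ≤ ‖x‖ := by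
  have z_ne_zero : z ≠ 0 := norm_pos_iff.1 (hc.trans_le hcz)
  obtain ⟨a, b, ha, hb, hab, rfl⟩ := hz
  set z := a • y + b • x
  have z_sub : z - b • (x - y) = y := by
    calc a • y + b • x - b • (x - y) = (a + b) • y := by module
      _ = y := by rw [hab, one_smul]
  have z_add : z + a • (x - y) = x := by
    calc a • y + b • x + a • (x - y) = (a + b) • x := by module
      _ = x := by rw [hab, one_smul]
  have y_lt_z : ‖z - b • (x - y)‖ < ‖z‖ := by
    rw [z_sub]
    exact hy.trans_le ((sq_div_sqrt_sq_add_sq_le hc.le L).trans hcz)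
  rcases ha.eq_or_lt with rfl | ha_pos
  · rw [zero_smul, add_zero] at z_add
    rw [z_add, angle_self (z_add ▸ z_ne_zero), mul_zero, add_zero]
  have h_steep : L * sin (angle z (x - y)) ≤ ‖z‖ * cos (angle z (x - y)) := by
    refine mul_sin_le_mul_cos_of_mul_sin_le hc hcz (sin_angle_nonneg _ _)
      (cos_angle_pos_of_norm_sub_smul_lt hb y_lt_z).le ?_
    calc ‖z‖ * sin (angle z (x - y)) ≤ ‖z - b • (x - y)‖ :=
          norm_mul_sin_angle_le_norm_sub_smul z (x - y) b
      _ ≤ c ^ 2 / √(L ^ 2 + c ^ 2) := by rw [z_sub]; exact hy.le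
  rw [← angle_smul_right_of_pos z (x - y) ha_pos] at h_steep
  simpa only [z_add] using norm_add_mul_angle_le_norm_add hL z_ne_zero h_steep

/-- The star-shaped domain `Ω_f` in an arbitrary real inner product space, unfolding to `Omega f` in
`EuclideanSpace ℝ (Fin n)`. Only the values of `f` on the unit sphere matter. -/
def radialDomain (f : E → ℝ) : Set E :=
  {x | x = 0 ∨ (x ≠ 0 ∧ ‖x‖ < f (‖x‖⁻¹ • x))}

lemma mem_radialDomain_iff_of_ne_zero {f : E → ℝ} {x : E} (hx : x ≠ 0) :
    x ∈ radialDomain f ↔ ‖x‖ < f (‖x‖⁻¹ • x) := by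
  simp [radialDomain, hx]

lemma arccos_inner_normalize (x y : E) :
    arccos ⟪‖x‖⁻¹ • x, ‖y‖⁻¹ • y⟫ = angle x y := by
  rw [angle, real_inner_smul_left, real_inner_smul_right, ← mul_assoc, ← mul_inv,
    inv_mul_eq_div]

lemma nonneg_of_abs_sub_le_mul_arccos_inner [Nontrivial E] {f : E → ℝ} {L : ℝ}
    (hlip : ∀ ω₁ ω₂ : E, ‖ω₁‖ = 1 → ‖ω₂‖ = 1 → |f ω₁ - f ω₂| ≤ L * arccos ⟪ω₁, ω₂⟫) :
    0 ≤ L := by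
  obtain ⟨ω, hω⟩ := exists_norm_eq E zero_le_one
  have antipodal : |f ω - f (-ω)| ≤ L * π := by
    simpa [hω] using hlip ω (-ω) hω ((norm_neg ω).trans hω)
  exact nonneg_of_mul_nonneg_left ((abs_nonneg _).trans antipodal) pi_pos

theorem omega_starShaped_wrt_ball_general (f : E → ℝ) (f₀ L : ℝ) (hf₀ : 0 < f₀)
    (hlow : ∀ ω : E, ‖ω‖ = 1 → f₀ ≤ f ω)
    (hlip : ∀ ω₁ ω₂ : E, ‖ω₁‖ = 1 → ‖ω₂‖ = 1 → |f ω₁ - f ω₂| ≤ L * arccos ⟪ω₁, ω₂⟫)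
    (y : E) (hy : ‖y‖ < f₀ ^ 2 / √(L ^ 2 + f₀ ^ 2)) :
    StarConvex ℝ y (radialDomain f) := by
  refine starConvex_iff_segment_subset.2 fun x hx z hz ↦ ?_
  rcases eq_or_ne z 0 with rfl | hz₀
  · exact Or.inl rfl
  rw [mem_radialDomain_iff_of_ne_zero hz₀]
  have unit_z := norm_smul_inv_norm (𝕜 := ℝ) hz₀
  rcases lt_or_ge ‖z‖ f₀ with hz_lt | hz_ge
  · exact hz_lt.trans_le (hlow _ unit_z)
  have gain : ‖z‖ + |L| * angle z x ≤ ‖x‖ :=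
    norm_add_mul_angle_le_norm_of_mem_segment hf₀ (abs_nonneg L) (by rwa [sq_abs]) hz hz_ge
  have hx₀ : x ≠ 0 := by
    refine norm_pos_iff.1 (hf₀.trans_le (hz_ge.trans (le_trans ?_ gain)))
    exact le_add_of_nonneg_right (mul_nonneg (abs_nonneg L) (angle_nonneg z x))
  have loss : f (‖x‖⁻¹ • x) - f (‖z‖⁻¹ • z) ≤ |L| * angle z x := by
    rw [angle_comm, ← arccos_inner_normalize]
    calc f (‖x‖⁻¹ • x) - f (‖z‖⁻¹ • z) ≤ L * arccos ⟪‖x‖⁻¹ • x, ‖z‖⁻¹ • z⟫ :=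
          (le_abs_self _).trans (hlip _ _ (norm_smul_inv_norm (𝕜 := ℝ) hx₀) unit_z)
      _ ≤ |L| * arccos ⟪‖x‖⁻¹ • x, ‖z‖⁻¹ • z⟫ :=
          mul_le_mul_of_nonneg_right (le_abs_self L) (arccos_nonneg _)
  linarith [(mem_radialDomain_iff_of_ne_zero hx₀).1 hx]

end InnerProductSpace

/-- If `f ≥ f₀ > 0` on the unit sphere and `f` is geodesically `L`-Lipschitz, then
`Ω_f` is star-shaped with respect to the ball `B_ε(0)` with `ε = f₀²/(Lπ + f₀)`:
every segment from a point of `B_ε(0)` to a point of `Ω_f` stays in `Ω_f`. -/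
theorem omega_starShaped_wrt_ball
    {n : ℕ} (hn : 2 ≤ n) (f : EuclideanSpace ℝ (Fin n) → ℝ) (f₀ L : ℝ) (hf₀ : 0 < f₀)
    (hlow : ∀ ω : EuclideanSpace ℝ (Fin n), ‖ω‖ = 1 → f₀ ≤ f ω)
    (hlip : ∀ ω₁ ω₂ : EuclideanSpace ℝ (Fin n), ‖ω₁‖ = 1 → ‖ω₂‖ = 1 →
      |f ω₁ - f ω₂| ≤ L * Real.arccos ⟪ω₁, ω₂⟫)
    (ε : ℝ) (hε : ε = f₀ ^ 2 / (L * π + f₀)) :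
    ∀ y : EuclideanSpace ℝ (Fin n), ‖y‖ < ε →
      ∀ x ∈ Omega f, ∀ t ∈ Set.Icc (0 : ℝ) 1, y + t • (x - y) ∈ Omega f := by
  intro y hy x hx t ht
  have : Nonempty (Fin n) := ⟨⟨0, by omega⟩⟩
  have hL : 0 ≤ L := nonneg_of_abs_sub_le_mul_arccos_inner hlip
  have hy' : ‖y‖ < f₀ ^ 2 / √(L ^ 2 + f₀ ^ 2) :=
    (hε ▸ hy).trans_le (sq_div_mul_pi_add_le_sq_div_sqrt hL hf₀)
  exact (omega_starShaped_wrt_ball_general f f₀ L hf₀ hlow hlip y hy').add_smul_sub_mem hx ht.1 ht.2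
end

section
/- Let n ≥ 2, let f : S^{n-1} → ℝ be geodesically L-Lipschitz with f(ω) ≥ f₀ > 0 for all ω, and define Φ_f : ℝⁿ → ℝⁿ by Φ_f(x) = f(x/‖x‖)·x for x ≠ 0 and Φ_f(0) = 0. Then Φ_f restricted to the open unit ball B = {x : ‖x‖ < 1} is a bijection from B onto Ω_f, and Φ_f is bi-Lipschitz on B: there exist constants 0 < c ≤ C such that c‖x − y‖ ≤ ‖Φ_f(x) − Φ_f(y)‖ ≤ C‖x − y‖ for all x, y ∈ B. -/
open Real
open scoped RealInnerProductSpace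

/-- The radial transformation `Φ_f(x) = f(x/‖x‖) • x` for `x ≠ 0`, `Φ_f(0) = 0`. -/
noncomputable def Phi {n : ℕ} (f : EuclideanSpace ℝ (Fin n) → ℝ) (x : EuclideanSpace ℝ (Fin n)) :
    EuclideanSpace ℝ (Fin n) :=
  open scoped Classical in
  if x = 0 then 0 else f (‖x‖⁻¹ • x) • x

/-!
Writing `u = x / ‖x‖` and `v = y / ‖y‖`, the identity
`f u • x - f v • y = f v • (x - y) + (f u - f v) • x` and the bound `‖x‖ * ‖u - v‖ ≤ 2 * ‖x - y‖`
show that `Φ_f` is Lipschitz as soon as `f` is bounded and Lipschitz for the chordal distance, which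
by Jordan's inequality is comparable to the geodesic one. Since `Φ_f` preserves rays, its inverse is
`Φ_{1/f}`, and `1 / f` is again bounded and Lipschitz because `f ≥ f₀ > 0`.
-/

open Metric Set NormedSpace
open scoped NNReal

section MetricSpace

variable {α β : Type*} [PseudoMetricSpace α]

theorem lipschitzOnWith_inv_of_le_norm {𝕜 : Type*} [NormedDivisionRing 𝕜] {f : α → 𝕜} {s : Set α}
    {K c : ℝ≥0} (hf : LipschitzOnWith K f s) (hc : 0 < c) (hcf : ∀ x ∈ s, c ≤ ‖f x‖) :
    LipschitzOnWith (K / (c * c)) f⁻¹ s := by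
  have hne : ∀ x ∈ s, f x ≠ 0 := fun x hx ↦
    norm_pos_iff.1 ((NNReal.coe_pos.2 hc).trans_le (hcf x hx))
  refine LipschitzOnWith.of_dist_le_mul fun x hx y hy ↦ ?_
  calc dist (f x)⁻¹ (f y)⁻¹ = dist (f x) (f y) / (‖f x‖ * ‖f y‖) :=
        dist_inv_inv₀ (hne x hx) (hne y hy)
    _ ≤ K * dist x y / (c * c) := by
        gcongr
        exacts [hf.dist_le_mul x hx y hy, hcf x hx, hcf y hy]
    _ = ↑(K / (c * c)) * dist x y := by
        push_cast
        ring

variable [PseudoMetricSpace β]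

theorem isBounded_image_of_lipschitzOnWith {f : α → β} {s : Set α} {K : ℝ≥0}
    (hf : LipschitzOnWith K f s) (hs : Bornology.IsBounded s) : Bornology.IsBounded (f '' s) := by
  obtain ⟨C, hC⟩ := isBounded_iff.1 hs
  refine isBounded_image_iff.2 ⟨K * C, fun x hx y hy ↦ (hf.dist_le_mul x hx y hy).trans ?_⟩
  gcongr
  exact hC hx hy

theorem exists_mul_dist_le_and_dist_le_mul {f : α → β} {K K' : ℝ≥0} (hf : LipschitzWith K f)
    (hf' : AntilipschitzWith K' f) :
    ∃ c C : ℝ, 0 < c ∧ c ≤ C ∧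
      ∀ x y, c * dist x y ≤ dist (f x) (f y) ∧ dist (f x) (f y) ≤ C * dist x y := by
  have hcC : ((K' : ℝ) + 1)⁻¹ ≤ K + 1 :=
    (inv_le_one_of_one_le₀ (by simp)).trans (by simp)
  refine ⟨((K' : ℝ) + 1)⁻¹, K + 1, by positivity, hcC, fun x y ↦ ⟨?_, ?_⟩⟩
  · rw [inv_mul_le_iff₀ (by positivity)]
    exact (hf'.le_mul_dist x y).trans (by gcongr; simp)
  · exact (hf.dist_le_mul x y).trans (by gcongr; simp)

end MetricSpace

section RadialScaling

variable {E : Type*} [NormedAddCommGroup E] [NormedSpace ℝ E] {f : E → ℝ}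

/-- The radial transformation `Φ_f` on a real normed space. No case distinction is needed:
the value at `0` is `f 0 • 0 = 0`. -/
noncomputable def radialScaling (f : E → ℝ) (x : E) : E := f (normalize x) • x

/-- The star-shaped domain `Ω_f` with radial function `f` in a real normed space. -/
def starDomain (f : E → ℝ) : Set E := {x | x = 0 ∨ ‖x‖ < f (normalize x)}

theorem Phi_eq_radialScaling {n : ℕ} (f : EuclideanSpace ℝ (Fin n) → ℝ) :
    Phi f = radialScaling f := by
  ext1 x
  by_cases hx : x = 0 <;> simp [Phi, radialScaling, NormedSpace.normalize, hx]

theorem Omega_eq_starDomain {n : ℕ} (f : EuclideanSpace ℝ (Fin n) → ℝ) :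
    Omega f = starDomain f := by
  ext x
  by_cases hx : x = 0 <;> simp [Omega, starDomain, NormedSpace.normalize, hx]

@[simp]
theorem radialScaling_zero (f : E → ℝ) : radialScaling f 0 = 0 := smul_zero _

theorem normalize_mem_sphere {x : E} (hx : x ≠ 0) : normalize x ∈ sphere (0 : E) 1 :=
  mem_sphere_zero_iff_norm.2 (norm_normalize hx)

theorem normalize_radialScaling (hf : ∀ u ∈ sphere (0 : E) 1, 0 < f u) (x : E) :
    normalize (radialScaling f x) = normalize x := by
  by_cases hx : x = 0
  · rw [hx, radialScaling_zero]
  · exact normalize_smul_of_pos (hf _ (normalize_mem_sphere hx)) x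

theorem leftInverse_radialScaling_inv (hf : ∀ u ∈ sphere (0 : E) 1, 0 < f u) :
    Function.LeftInverse (radialScaling f⁻¹) (radialScaling f) := by
  intro x
  by_cases hx : x = 0
  · simp only [hx, radialScaling_zero]
  · rw [radialScaling, normalize_radialScaling hf, Pi.inv_apply, radialScaling,
      inv_smul_smul₀ (hf _ (normalize_mem_sphere hx)).ne']

theorem rightInverse_radialScaling_inv (hf : ∀ u ∈ sphere (0 : E) 1, 0 < f u) :
    Function.RightInverse (radialScaling f⁻¹) (radialScaling f) := by
  have hinv := leftInverse_radialScaling_inv (f := f⁻¹) fun u hu ↦ inv_pos.2 (hf u hu)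
  rwa [inv_inv] at hinv

theorem radialScaling_mem_starDomain_iff (hf : ∀ u ∈ sphere (0 : E) 1, 0 < f u) {x : E} :
    radialScaling f x ∈ starDomain f ↔ x ∈ ball (0 : E) 1 := by
  by_cases hx : x = 0
  · simp [hx, starDomain]
  have hpos : 0 < f (normalize x) := hf _ (normalize_mem_sphere hx)
  have hne : radialScaling f x ≠ 0 := smul_ne_zero hpos.ne' hx
  have hnorm : ‖radialScaling f x‖ = f (normalize x) * ‖x‖ := norm_smul_of_nonneg hpos.le x
  rw [starDomain, mem_ofPred_eq, or_iff_right hne, normalize_radialScaling hf, hnorm,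
    mul_lt_iff_lt_one_right hpos, mem_ball_zero_iff]

theorem bijOn_radialScaling (hf : ∀ u ∈ sphere (0 : E) 1, 0 < f u) :
    BijOn (radialScaling f) (ball 0 1) (starDomain f) := by
  have hright := rightInverse_radialScaling_inv hf
  refine InvOn.bijOn ⟨(leftInverse_radialScaling_inv hf).leftInvOn _, hright.leftInvOn _⟩
    (fun x hx ↦ (radialScaling_mem_starDomain_iff hf).2 hx) fun y hy ↦ ?_
  rwa [← radialScaling_mem_starDomain_iff hf, hright y]

theorem norm_mul_norm_normalize_sub_le (x y : E) :
    ‖x‖ * ‖normalize x - normalize y‖ ≤ 2 * ‖x - y‖ := by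
  have hdecomp : ‖x‖ • (normalize x - normalize y) = (x - y) + (‖y‖ - ‖x‖) • normalize y := by
    rw [smul_sub, sub_smul, norm_smul_normalize, norm_smul_normalize]
    abel
  have hunit : ‖normalize y‖ ≤ 1 := by
    by_cases hy : y = 0
    · simp [hy]
    · exact (norm_normalize hy).le
  calc ‖x‖ * ‖normalize x - normalize y‖ = ‖(x - y) + (‖y‖ - ‖x‖) • normalize y‖ := by
        rw [← hdecomp, norm_smul, norm_norm]
    _ ≤ ‖x - y‖ + |‖y‖ - ‖x‖| * ‖normalize y‖ := by
        rw [← Real.norm_eq_abs, ← norm_smul]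
        exact norm_add_le _ _
    _ ≤ ‖x - y‖ + ‖x - y‖ * 1 := by
        gcongr
        exact norm_sub_rev x y ▸ abs_norm_sub_norm_le y x
    _ = 2 * ‖x - y‖ := by ring

theorem norm_radialScaling_le {M : ℝ} (hM : ∀ u ∈ sphere (0 : E) 1, ‖f u‖ ≤ M) (x : E) :
    ‖radialScaling f x‖ ≤ M * ‖x‖ := by
  by_cases hx : x = 0
  · simp [hx]
  · rw [radialScaling, norm_smul]
    gcongr
    exact hM _ (normalize_mem_sphere hx)

theorem lipschitzWith_radialScaling {M K : ℝ≥0} (hM : ∀ u ∈ sphere (0 : E) 1, ‖f u‖ ≤ M)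
    (hK : LipschitzOnWith K f (sphere 0 1)) : LipschitzWith (M + 2 * K) (radialScaling f) := by
  refine LipschitzWith.of_dist_le_mul fun x y ↦ ?_
  rw [dist_eq_norm, dist_eq_norm]
  push_cast
  have hnorm_le (z : E) : ‖radialScaling f z‖ ≤ (M + 2 * K) * ‖z‖ :=
    (norm_radialScaling_le hM z).trans (by gcongr; simp)
  rcases eq_or_ne x 0 with rfl | hx
  · simpa using hnorm_le y
  rcases eq_or_ne y 0 with rfl | hy
  · simpa using hnorm_le x
  set u := normalize x
  set v := normalize y
  have hu : u ∈ sphere (0 : E) 1 := normalize_mem_sphere hx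
  have hv : v ∈ sphere (0 : E) 1 := normalize_mem_sphere hy
  calc ‖f u • x - f v • y‖ = ‖f v • (x - y) + (f u - f v) • x‖ := by
        congr 1
        module
    _ ≤ ‖f v‖ * ‖x - y‖ + ‖f u - f v‖ * ‖x‖ := by
        rw [← norm_smul, ← norm_smul]
        exact norm_add_le _ _
    _ ≤ M * ‖x - y‖ + K * ‖u - v‖ * ‖x‖ := by
        gcongr
        exacts [hM v hv, hK.norm_sub_le hu hv]
    _ = M * ‖x - y‖ + K * (‖x‖ * ‖u - v‖) := by ring
    _ ≤ M * ‖x - y‖ + K * (2 * ‖x - y‖) := by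
        gcongr _ + _ * ?_
        exact norm_mul_norm_normalize_sub_le x y
    _ = (M + 2 * K) * ‖x - y‖ := by ring

theorem exists_lipschitzWith_radialScaling {K : ℝ≥0} (hK : LipschitzOnWith K f (sphere 0 1)) :
    ∃ C, LipschitzWith C (radialScaling f) := by
  obtain ⟨M, hM0, hM⟩ :=
    (isBounded_image_of_lipschitzOnWith hK isBounded_sphere).exists_pos_norm_le
  lift M to ℝ≥0 using hM0.le
  exact ⟨_, lipschitzWith_radialScaling (fun u hu ↦ hM _ (mem_image_of_mem f hu)) hK⟩

theorem exists_antilipschitzWith_radialScaling {c : ℝ} {K : ℝ≥0} (hc : 0 < c)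
    (hcf : ∀ u ∈ sphere (0 : E) 1, c ≤ f u) (hK : LipschitzOnWith K f (sphere 0 1)) :
    ∃ C, AntilipschitzWith C (radialScaling f) := by
  lift c to ℝ≥0 using hc.le
  have hinv := lipschitzOnWith_inv_of_le_norm hK hc fun u hu ↦ (hcf u hu).trans (le_abs_self _)
  obtain ⟨C, hC⟩ := exists_lipschitzWith_radialScaling hinv
  exact ⟨C, hC.to_rightInverse (leftInverse_radialScaling_inv fun u hu ↦ hc.trans_le (hcf u hu))⟩

end RadialScaling

section InnerProductSpace

variable {E : Type*} [NormedAddCommGroup E] [InnerProductSpace ℝ E]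

theorem arccos_inner_le_pi_div_two_mul_norm_sub {u v : E} (hu : ‖u‖ = 1) (hv : ‖v‖ = 1) :
    arccos ⟪u, v⟫ ≤ π / 2 * ‖u - v‖ := by
  set θ := arccos ⟪u, v⟫
  have hcos : cos θ = ⟪u, v⟫ := by
    have habs : |⟪u, v⟫| ≤ 1 := by simpa [hu, hv] using abs_real_inner_le_norm u v
    exact cos_arccos (abs_le.1 habs).1 (abs_le.1 habs).2
  have hchord : ‖u - v‖ ^ 2 = (2 * sin (θ / 2)) ^ 2 := by
    rw [norm_sub_sq_real, hu, hv, ← hcos, mul_pow, sin_sq_eq_half_sub,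
      mul_div_cancel₀ _ two_ne_zero]
    ring
  have hθ0 : 0 ≤ θ := arccos_nonneg _
  have hθπ : θ ≤ π := arccos_le_pi _
  have hjordan : 2 / π * (θ / 2) ≤ sin (θ / 2) := mul_le_sin (by linarith) (by linarith)
  calc θ = π / 2 * (2 * (2 / π * (θ / 2))) := by field_simp
    _ ≤ π / 2 * (2 * sin (θ / 2)) := by gcongr
    _ ≤ π / 2 * ‖u - v‖ := by
        gcongr
        exact le_of_sq_le_sq hchord.ge (norm_nonneg _)

theorem lipschitzOnWith_sphere_of_abs_sub_le_arccos {f : E → ℝ} {L : ℝ}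
    (hf : ∀ u v : E, ‖u‖ = 1 → ‖v‖ = 1 → |f u - f v| ≤ L * arccos ⟪u, v⟫) :
    LipschitzOnWith (L.toNNReal * (NNReal.pi / 2)) f (sphere 0 1) := by
  refine LipschitzOnWith.of_dist_le_mul fun u hu v hv ↦ ?_
  rw [mem_sphere_zero_iff_norm] at hu hv
  calc |f u - f v| ≤ L * arccos ⟪u, v⟫ := hf u v hu hv
    _ ≤ L.toNNReal * (π / 2 * ‖u - v‖) := by
        gcongr
        exacts [arccos_nonneg _, L.le_coe_toNNReal, arccos_inner_le_pi_div_two_mul_norm_sub hu hv]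
    _ = ↑(L.toNNReal * (NNReal.pi / 2)) * dist u v := by
        rw [dist_eq_norm]
        push_cast [NNReal.coe_real_pi]
        ring

theorem phi_biLipschitz_bijOn_general (f : E → ℝ) (f₀ L : ℝ) (hf₀ : 0 < f₀)
    (hlow : ∀ ω : E, ‖ω‖ = 1 → f₀ ≤ f ω)
    (hlip : ∀ ω₁ ω₂ : E, ‖ω₁‖ = 1 → ‖ω₂‖ = 1 → |f ω₁ - f ω₂| ≤ L * arccos ⟪ω₁, ω₂⟫) :
    BijOn (radialScaling f) (ball 0 1) (starDomain f) ∧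
      ∃ c C : ℝ, 0 < c ∧ c ≤ C ∧ ∀ x y,
        c * ‖x - y‖ ≤ ‖radialScaling f x - radialScaling f y‖ ∧
          ‖radialScaling f x - radialScaling f y‖ ≤ C * ‖x - y‖ := by
  have hlow' : ∀ u ∈ sphere (0 : E) 1, f₀ ≤ f u := fun u hu ↦
    hlow u (mem_sphere_zero_iff_norm.1 hu)
  have hchordal := lipschitzOnWith_sphere_of_abs_sub_le_arccos hlip
  obtain ⟨K, hK⟩ := exists_lipschitzWith_radialScaling hchordal
  obtain ⟨K', hK'⟩ := exists_antilipschitzWith_radialScaling hf₀ hlow' hchordal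
  refine ⟨bijOn_radialScaling fun u hu ↦ hf₀.trans_le (hlow' u hu), ?_⟩
  simpa only [dist_eq_norm] using exists_mul_dist_le_and_dist_le_mul hK hK'

end InnerProductSpace

/-- If `f` is geodesically `L`-Lipschitz on the unit sphere with `f ≥ f₀ > 0`, then
`Φ_f` maps the open unit ball `B` bijectively onto `Ω_f` and is bi-Lipschitz on `B`. -/
theorem phi_biLipschitz_bijOn
    {n : ℕ} (hn : 2 ≤ n) (f : EuclideanSpace ℝ (Fin n) → ℝ) (f₀ L : ℝ) (hf₀ : 0 < f₀)
    (hlow : ∀ ω : EuclideanSpace ℝ (Fin n), ‖ω‖ = 1 → f₀ ≤ f ω)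
    (hlip : ∀ ω₁ ω₂ : EuclideanSpace ℝ (Fin n), ‖ω₁‖ = 1 → ‖ω₂‖ = 1 →
      |f ω₁ - f ω₂| ≤ L * Real.arccos ⟪ω₁, ω₂⟫) :
    Set.BijOn (Phi f) (Metric.ball (0 : EuclideanSpace ℝ (Fin n)) 1) (Omega f) ∧
      ∃ c C : ℝ, 0 < c ∧ c ≤ C ∧
        ∀ x ∈ Metric.ball (0 : EuclideanSpace ℝ (Fin n)) 1,
          ∀ y ∈ Metric.ball (0 : EuclideanSpace ℝ (Fin n)) 1,
            c * ‖x - y‖ ≤ ‖Phi f x - Phi f y‖ ∧ ‖Phi f x - Phi f y‖ ≤ C * ‖x - y‖ := by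
  rw [Phi_eq_radialScaling, Omega_eq_starDomain]
  obtain ⟨hbij, c, C, hc, hcC, hbounds⟩ := phi_biLipschitz_bijOn_general f f₀ L hf₀ hlow hlip
  exact ⟨hbij, c, C, hc, hcC, fun x _ y _ ↦ hbounds x y⟩
end

section
/- Let n ≥ 2, let f : S^{n-1} → ℝ be continuous with f(ω) > 0 for all ω, and let q : S^{n-1} → ℝ be integrable with respect to the surface measure σ. Consider the set V of geodesically 1-Lipschitz functions v : S^{n-1} → ℝ satisfying ∫_{S^{n-1}} f^{n-1} v dσ = 0. Then there exists g ∈ V such that ∫_{S^{n-1}} q g dσ = inf_{v ∈ V} ∫_{S^{n-1}} q v dσ; that is, the linear shape-derivative functional v ↦ ∫ q v dσ attains its minimum over the admissible class V of steepest-descent directions. -/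
open Real MeasureTheory
open scoped RealInnerProductSpace

/-! Arzelà–Ascoli and the direct method: the Lipschitz bound makes the admissible functions
equicontinuous. Writing `p` for the weight, the constraint `∫ p v = 0` gives
`v z * ∫ p = ∫ p x (v z - v x) dx`, so `v` is uniformly bounded as soon as `∫ p ≠ 0`. Hence the
admissible class is compact for uniform convergence, and `v ↦ ∫ q v` is continuous on it.
On the sphere, `∫ f ^ (n - 1) > 0` because the surface measure is finite (each closed hemisphere
is a Lipschitz image of a ball under inverse stereographic projection) and nonzero (the sphere
projects orthogonally onto an equatorial ball). -/

open Module Metric Set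
open scoped BoundedContinuousFunction

section IntegralAgainstWeight

variable {X : Type*} [TopologicalSpace X] [MeasurableSpace X] [OpensMeasurableSpace X]
  {μ : Measure X} {r : X → ℝ}

lemma integrable_mul_boundedContinuousFunction (hr : Integrable r μ) (w : X →ᵇ ℝ) :
    Integrable (fun x => r x * w x) μ :=
  hr.mul_bdd w.continuous.aestronglyMeasurable (.of_forall w.norm_coe_le_norm)

lemma continuous_integral_mul_boundedContinuousFunction (hr : Integrable r μ) :
    Continuous fun w : X →ᵇ ℝ => ∫ x, r x * w x ∂μ := by
  refine LipschitzWith.continuous (K := (∫ x, ‖r x‖ ∂μ).toNNReal) (.of_dist_le_mul fun v w => ?_)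
  rw [Real.coe_toNNReal _ (integral_nonneg fun _ => norm_nonneg _), dist_eq_norm,
    ← integral_sub (integrable_mul_boundedContinuousFunction hr v)
      (integrable_mul_boundedContinuousFunction hr w), ← integral_mul_const]
  refine norm_integral_le_of_norm_le (hr.norm.mul_const _) (.of_forall fun x => ?_)
  rw [← mul_sub, norm_mul, ← dist_eq_norm]
  gcongr
  exact BoundedContinuousFunction.dist_coe_le_dist x

end IntegralAgainstWeight

/-- The directions over which a linear functional is minimised: the functions whose increments are
bounded by `d` (the `1`-Lipschitz functions when `d` is a distance) and whose integral against the
weight `p` vanishes. -/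
def admissibleDirections {X : Type*} [MeasurableSpace X] (μ : Measure X) (d : X → X → ℝ)
    (p : X → ℝ) : Set (X → ℝ) :=
  {v | (∀ x y, |v x - v y| ≤ d x y) ∧ ∫ x, p x * v x ∂μ = 0}

section Modulus

variable {X : Type*} [TopologicalSpace X] {d : X → X → ℝ}

lemma equicontinuous_of_abs_sub_le (hd : ∀ x, Continuous (d x)) (hd0 : ∀ x, d x x = 0)
    {ι : Type*} {F : ι → X → ℝ} (hF : ∀ i x y, |F i x - F i y| ≤ d x y) : Equicontinuous F :=
  fun x => equicontinuousAt_of_continuity_modulus (d x) ((hd x).tendsto' x 0 (hd0 x)) F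
    (.of_forall fun y i => hF i x y)

lemma continuous_of_abs_sub_le (hd : ∀ x, Continuous (d x)) (hd0 : ∀ x, d x x = 0)
    {v : X → ℝ} (hv : ∀ x y, |v x - v y| ≤ d x y) : Continuous v :=
  (equicontinuous_of_abs_sub_le hd hd0 fun _ : Unit => hv).continuous ()

variable [MeasurableSpace X] [OpensMeasurableSpace X] {μ : Measure X} {p q : X → ℝ}

lemma isClosed_setOf_coe_mem_admissibleDirections (hp : Integrable p μ) :
    IsClosed {w : X →ᵇ ℝ | ⇑w ∈ admissibleDirections μ d p} := by
  have isClosed_modulus : IsClosed {w : X →ᵇ ℝ | ∀ x y, |w x - w y| ≤ d x y} := by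
    simp only [Set.ofPred_forall]
    exact isClosed_iInter fun x => isClosed_iInter fun y =>
      isClosed_le ((continuous_eval_const x).sub (continuous_eval_const y)).abs continuous_const
  exact isClosed_modulus.inter
    (isClosed_eq (continuous_integral_mul_boundedContinuousFunction hp) continuous_const)

lemma abs_mul_abs_integral_le_of_mem_admissibleDirections (hp : Integrable p μ) {D : ℝ}
    (hD : ∀ x y, d x y ≤ D) {w : X →ᵇ ℝ} (hw : ⇑w ∈ admissibleDirections μ d p) (z : X) :
    |w z| * |∫ x, p x ∂μ| ≤ (∫ x, |p x| ∂μ) * D := by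
  have integral_eq : ∫ x, p x * (w z - w x) ∂μ = (∫ x, p x ∂μ) * w z := by
    simp only [mul_sub]
    rw [integral_sub (hp.mul_const _) (integrable_mul_boundedContinuousFunction hp w), hw.2,
      sub_zero, integral_mul_const]
  rw [← abs_mul, mul_comm, ← integral_eq, ← integral_mul_const]
  refine norm_integral_le_of_norm_le (f := fun x => p x * (w z - w x)) (hp.abs.mul_const D)
    (.of_forall fun x => ?_)
  rw [norm_mul, Real.norm_eq_abs, Real.norm_eq_abs]
  gcongr
  exact (hw.1 z x).trans (hD z x)

variable [CompactSpace X]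

lemma isCompact_setOf_coe_mem_admissibleDirections (hd : Continuous (Function.uncurry d))
    (hd0 : ∀ x, d x x = 0) (hp : ∫ x, p x ∂μ ≠ 0) :
    IsCompact {w : X →ᵇ ℝ | ⇑w ∈ admissibleDirections μ d p} := by
  have hp_int : Integrable p μ := .of_integral_ne_zero hp
  obtain ⟨D, hD⟩ := (isCompact_range hd).bddAbove
  have hdD : ∀ x y, d x y ≤ D := fun x y => hD ⟨(x, y), rfl⟩
  refine BoundedContinuousFunction.arzela_ascoli₂
    (closedBall 0 ((∫ x, |p x| ∂μ) * D / |∫ x, p x ∂μ|)) (isCompact_closedBall _ _) _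
    (isClosed_setOf_coe_mem_admissibleDirections hp_int) (fun w z hw => ?_)
    (equicontinuous_of_abs_sub_le (fun x => hd.uncurry_left x) hd0 fun w => w.2.1)
  rw [mem_closedBall_zero_iff, Real.norm_eq_abs, le_div_iff₀ (abs_pos.2 hp)]
  exact abs_mul_abs_integral_le_of_mem_admissibleDirections hp_int hdD hw z

theorem exists_isMinOn_integral_mul_admissibleDirections
    (hd : Continuous (Function.uncurry d)) (hd_nonneg : ∀ x y, 0 ≤ d x y) (hd0 : ∀ x, d x x = 0)
    (hp : ∫ x, p x ∂μ ≠ 0) (hq : Integrable q μ) :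
    ∃ g ∈ admissibleDirections μ d p,
      IsMinOn (fun v => ∫ x, q x * v x ∂μ) (admissibleDirections μ d p) g := by
  have zero_mem : ⇑(0 : X →ᵇ ℝ) ∈ admissibleDirections μ d p := by
    simpa [admissibleDirections] using hd_nonneg
  obtain ⟨g, hg, hmin⟩ := (isCompact_setOf_coe_mem_admissibleDirections hd hd0 hp).exists_isMinOn
    ⟨0, zero_mem⟩ (continuous_integral_mul_boundedContinuousFunction hq).continuousOn
  refine ⟨g, hg, fun v hv => ?_⟩
  have hv_cont : Continuous v := continuous_of_abs_sub_le (fun x => hd.uncurry_left x) hd0 hv.1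
  exact hmin (a := .mkOfCompact ⟨v, hv_cont⟩) hv

end Modulus

section CompactSet

variable {X : Type*} [MeasurableSpace X] {μ : Measure X} {K : Set X} {d : X → X → ℝ}
  {p q : X → ℝ}

lemma restrict_mem_admissibleDirections_iff (hK : MeasurableSet K) {v : X → ℝ} :
    (fun x : K => v x) ∈ admissibleDirections (μ.comap (↑)) (fun x y : K => d x y)
        (fun x : K => p x) ↔
      (∀ x y, x ∈ K → y ∈ K → |v x - v y| ≤ d x y) ∧ ∫ x in K, p x * v x ∂μ = 0 := by
  rw [← integral_subtype_comap hK]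
  simp only [admissibleDirections, mem_ofPred_eq, Subtype.forall]
  grind

theorem exists_isMinOn_setIntegral_mul [TopologicalSpace X] [OpensMeasurableSpace X]
    (hK : IsCompact K) (hK_meas : MeasurableSet K)
    (hd : ContinuousOn (Function.uncurry d) (K ×ˢ K)) (hd_nonneg : ∀ x ∈ K, ∀ y ∈ K, 0 ≤ d x y)
    (hd0 : ∀ x ∈ K, d x x = 0) (hp : ∫ x in K, p x ∂μ ≠ 0) (hq : IntegrableOn q K μ) :
    let V := {v : X → ℝ | (∀ x y, x ∈ K → y ∈ K → |v x - v y| ≤ d x y) ∧ ∫ x in K, p x * v x ∂μ = 0}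
    ∃ g ∈ V, IsMinOn (fun v => ∫ x in K, q x * v x ∂μ) V g := by
  intro V
  have : CompactSpace K := isCompact_iff_compactSpace.1 hK
  rw [← integral_subtype_comap hK_meas] at hp
  obtain ⟨g, hg, hmin⟩ := exists_isMinOn_integral_mul_admissibleDirections
    (μ := μ.comap ((↑) : K → X)) (d := fun x y : K => d x y)
    (hd.comp_continuous (f := fun z : K × K => (z.1.1, z.2.1)) (by fun_prop)
      fun z => ⟨z.1.2, z.2.2⟩)
    (fun x y => hd_nonneg x x.2 y y.2) (fun x => hd0 x x.2) hp
    ((integrableOn_iff_comap_subtypeVal hK_meas).1 hq)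
  obtain ⟨G, rfl⟩ : ∃ G : X → ℝ, (fun x : K => G x) = g :=
    ⟨Function.extend Subtype.val g 0, Function.extend_comp Subtype.val_injective g 0⟩
  refine ⟨G, (restrict_mem_admissibleDirections_iff hK_meas).1 hg, fun v hv => ?_⟩
  simpa only [mem_ofPred_eq, ← integral_subtype_comap hK_meas, Function.comp_apply] using
    hmin ((restrict_mem_admissibleDirections_iff hK_meas).2 hv)

end CompactSet

section SphereMeasure

variable {E : Type*} [NormedAddCommGroup E] [InnerProductSpace ℝ E]

lemma hemisphere_subset_image_stereoInvFunAux {v : E} (hv : ‖v‖ = 1) :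
    {x ∈ sphere (0 : E) 1 | ⟪v, x⟫ ≤ 0} ⊆
      (fun w : (ℝ ∙ v)ᗮ => stereoInvFunAux v w) '' closedBall 0 2 := by
  rintro x ⟨hx, hvx⟩
  have hx_ne : x ≠ v := by
    rintro rfl
    rw [real_inner_self_eq_norm_sq, hv] at hvx
    norm_num at hvx
  refine ⟨stereoToFun v x, ?_, congr_arg Subtype.val (stereo_left_inv hv (x := ⟨x, hx⟩) hx_ne)⟩
  have hproj : ‖(ℝ ∙ v)ᗮ.orthogonalProjectionOnto x‖ ≤ 1 :=
    (Submodule.norm_orthogonalProjectionOnto_apply_le _ x).trans_eq (mem_sphere_zero_iff_norm.1 hx)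
  have hscale : ‖2 / (1 - ⟪v, x⟫)‖ ≤ 2 := by
    rw [Real.norm_of_nonneg (div_nonneg two_pos.le (by linarith))]
    exact div_le_self two_pos.le (by linarith)
  rw [mem_closedBall_zero_iff, stereoToFun_apply, norm_smul, innerSL_apply_apply]
  nlinarith [norm_nonneg (2 / (1 - ⟪v, x⟫))]

lemma ball_subset_image_orthogonalProjectionOnto_sphere {v : E} (hv : ‖v‖ = 1) :
    ball 0 1 ⊆ (ℝ ∙ v)ᗮ.orthogonalProjectionOnto '' sphere (0 : E) 1 := by
  intro w hw
  have hw_norm : ‖w‖ ^ 2 ≤ 1 := pow_le_one₀ (norm_nonneg w) (mem_ball_zero_iff.1 hw).le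
  have hwv : ⟪(w : E), √(1 - ‖w‖ ^ 2) • v⟫ = 0 := by
    rw [inner_smul_right, Submodule.mem_orthogonal_singleton_iff_inner_left.1 w.2, mul_zero]
  refine ⟨w + √(1 - ‖w‖ ^ 2) • v, ?_, ?_⟩
  · rw [mem_sphere_zero_iff_norm, ← mul_self_inj (norm_nonneg _) zero_le_one,
      norm_add_sq_eq_norm_sq_add_norm_sq_real hwv, norm_smul, hv, mul_one,
      Real.norm_of_nonneg (Real.sqrt_nonneg _), Real.mul_self_sqrt (by linarith)]
    simp [sq]
  · simp [Submodule.orthogonalProjectionOnto_orthogonalComplement_singleton_eq_zero]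

variable [FiniteDimensional ℝ E]

lemma finrank_orthogonal_span_singleton_cast {v : E} (hv : ‖v‖ = 1) :
    (finrank ℝ (ℝ ∙ v)ᗮ : ℝ) = finrank ℝ E - 1 := by
  have hv0 : v ≠ 0 := norm_ne_zero_iff.1 (hv ▸ one_ne_zero)
  rw [← (ℝ ∙ v).finrank_add_finrank_orthogonal, finrank_span_singleton hv0]
  push_cast
  ring

variable [MeasurableSpace E] [BorelSpace E]

lemma hausdorffMeasure_hemisphere_lt_top {v : E} (hv : ‖v‖ = 1) :
    μH[(finrank ℝ E : ℝ) - 1] {x ∈ sphere (0 : E) 1 | ⟪v, x⟫ ≤ 0} < ⊤ := by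
  rw [← finrank_orthogonal_span_singleton_cast hv]
  have contDiff_stereo : ContDiff ℝ 1 fun w : (ℝ ∙ v)ᗮ => stereoInvFunAux v w :=
    contDiff_stereoInvFunAux.comp (ℝ ∙ v)ᗮ.subtypeL.contDiff
  obtain ⟨C, hC⟩ := contDiff_stereo.contDiffOn.exists_lipschitzOnWith one_ne_zero
    (convex_closedBall 0 2) (isCompact_closedBall _ _)
  calc _ ≤ _ := measure_mono (hemisphere_subset_image_stereoInvFunAux hv)
    _ ≤ _ := hC.hausdorffMeasure_image_le (Nat.cast_nonneg _)
    _ < ⊤ := ENNReal.mul_lt_top (by simp) (isCompact_closedBall _ _).measure_lt_top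

lemma hausdorffMeasure_sphere_lt_top :
    μH[(finrank ℝ E : ℝ) - 1] (sphere (0 : E) 1) < ⊤ := by
  rcases (sphere (0 : E) 1).eq_empty_or_nonempty with h | ⟨v, hv⟩
  · simp [h]
  · rw [mem_sphere_zero_iff_norm] at hv
    have sphere_subset : sphere (0 : E) 1 ⊆
        {x ∈ sphere (0 : E) 1 | ⟪v, x⟫ ≤ 0} ∪ {x ∈ sphere (0 : E) 1 | ⟪-v, x⟫ ≤ 0} :=
      fun x hx => (le_total ⟪v, x⟫ 0).imp (⟨hx, ·⟩) fun h => ⟨hx, by simpa [inner_neg_left] using h⟩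
    exact (measure_mono sphere_subset).trans_lt <| measure_union_lt_top
      (hausdorffMeasure_hemisphere_lt_top hv)
      (hausdorffMeasure_hemisphere_lt_top ((norm_neg v).trans hv))

lemma hausdorffMeasure_sphere_pos [Nontrivial E] :
    0 < μH[(finrank ℝ E : ℝ) - 1] (sphere (0 : E) 1) := by
  obtain ⟨v, hv⟩ := exists_norm_eq E zero_le_one
  rw [← finrank_orthogonal_span_singleton_cast hv]
  calc 0 < μH[(finrank ℝ (ℝ ∙ v)ᗮ : ℝ)] (ball (0 : (ℝ ∙ v)ᗮ) 1) :=
        measure_ball_pos _ _ one_pos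
    _ ≤ _ := measure_mono (ball_subset_image_orthogonalProjectionOnto_sphere hv)
    _ ≤ _ := hausdorffMeasure_orthogonalProjectionOnto_le _ _ _ (Nat.cast_nonneg _)

lemma setIntegral_sphere_pos [Nontrivial E] {p : E → ℝ} (hp : ContinuousOn p (sphere 0 1))
    (hp_pos : ∀ x, ‖x‖ = 1 → 0 < p x) :
    0 < ∫ x in sphere (0 : E) 1, p x ∂μH[(finrank ℝ E : ℝ) - 1] := by
  have hS : MeasurableSet (sphere (0 : E) 1) := isClosed_sphere.measurableSet
  have hp_pos' : ∀ x ∈ sphere (0 : E) 1, 0 < p x := fun x hx => hp_pos x (by simpa using hx)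
  have support_supset : sphere (0 : E) 1 ⊆ p.support := fun x hx => (hp_pos' x hx).ne'
  rw [setIntegral_pos_iff_support_of_nonneg_ae
    (ae_restrict_of_forall_mem hS fun x hx => (hp_pos' x hx).le)
    (hp.integrableOn_of_subset_isCompact (isCompact_sphere _ _) hS subset_rfl
      hausdorffMeasure_sphere_lt_top.ne),
    inter_eq_right.2 support_supset]
  exact hausdorffMeasure_sphere_pos

end SphereMeasure

theorem exists_steepest_descent_direction_general {E : Type*} [NormedAddCommGroup E]
    [InnerProductSpace ℝ E] [ProperSpace E] [MeasurableSpace E] [BorelSpace E] {σ : Measure E}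
    {p q : E → ℝ} (hp : ∫ ω in sphere (0 : E) 1, p ω ∂σ ≠ 0)
    (hq : IntegrableOn q (sphere 0 1) σ) :
    let V := {v : E → ℝ | (∀ ω₁ ω₂ : E, ‖ω₁‖ = 1 → ‖ω₂‖ = 1 → |v ω₁ - v ω₂| ≤ arccos ⟪ω₁, ω₂⟫) ∧
      ∫ ω in sphere (0 : E) 1, p ω * v ω ∂σ = 0}
    ∃ g ∈ V, IsMinOn (fun v => ∫ ω in sphere (0 : E) 1, q ω * v ω ∂σ) V g := by
  have angle_cont : Continuous fun z : E × E => arccos ⟪z.1, z.2⟫ := by fun_prop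
  have angle_self : ∀ ω ∈ sphere (0 : E) 1, arccos ⟪ω, ω⟫ = 0 := fun ω hω => by
    rw [real_inner_self_eq_norm_sq, mem_sphere_zero_iff_norm.1 hω, one_pow, arccos_one]
  have h := exists_isMinOn_setIntegral_mul (d := fun x y => arccos ⟪x, y⟫)
    (isCompact_sphere (0 : E) 1) isClosed_sphere.measurableSet angle_cont.continuousOn
    (fun _ _ _ _ => arccos_nonneg _) angle_self hp hq
  simpa only [mem_sphere_zero_iff_norm] using h

/-- Existence of a direction of steepest descent: for `n ≥ 2`, `f` continuous and
positive on the unit sphere and `q` integrable on the sphere with respect to the surface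
(Hausdorff) measure `σ`, the linear shape-derivative functional `v ↦ ∫ q v dσ` attains
its infimum over the admissible class `V` of geodesically `1`-Lipschitz functions
satisfying the linearised volume constraint `∫ f^{n-1} v dσ = 0`. -/
theorem exists_steepest_descent_direction
    {n : ℕ} (hn : 2 ≤ n) (f q : EuclideanSpace ℝ (Fin n) → ℝ)
    (hfpos : ∀ ω : EuclideanSpace ℝ (Fin n), ‖ω‖ = 1 → 0 < f ω)
    (hfc : ContinuousOn f (Metric.sphere (0 : EuclideanSpace ℝ (Fin n)) 1))
    (hq : IntegrableOn q (Metric.sphere (0 : EuclideanSpace ℝ (Fin n)) 1)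
      (μH[(n : ℝ) - 1]))
    (V : Set (EuclideanSpace ℝ (Fin n) → ℝ))
    (hV : V = {v | (∀ ω₁ ω₂ : EuclideanSpace ℝ (Fin n), ‖ω₁‖ = 1 → ‖ω₂‖ = 1 →
        |v ω₁ - v ω₂| ≤ Real.arccos ⟪ω₁, ω₂⟫) ∧
      (∫ ω in Metric.sphere (0 : EuclideanSpace ℝ (Fin n)) 1,
        f ω ^ (n - 1) * v ω ∂(μH[(n : ℝ) - 1])) = 0}) :
    ∃ g ∈ V,
      (∫ ω in Metric.sphere (0 : EuclideanSpace ℝ (Fin n)) 1,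
          q ω * g ω ∂(μH[(n : ℝ) - 1])) =
        sInf ((fun v : EuclideanSpace ℝ (Fin n) → ℝ =>
          ∫ ω in Metric.sphere (0 : EuclideanSpace ℝ (Fin n)) 1,
            q ω * v ω ∂(μH[(n : ℝ) - 1])) '' V) := by
  have : NeZero n := ⟨by lia⟩
  have weight_pos := setIntegral_sphere_pos (hfc.pow (n - 1)) fun ω hω => pow_pos (hfpos ω hω) _
  rw [finrank_euclideanSpace_fin] at weight_pos
  obtain ⟨g, hg, hmin⟩ := exists_steepest_descent_direction_general
    (p := fun ω => f ω ^ (n - 1)) weight_pos.ne' hq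
  subst hV
  exact ⟨g, hg, (sInf_image'.trans (hmin.iInf_eq hg)).symm⟩
end

section
/- Let q : (0,2π) → ℝ be Lebesgue integrable with ∫₀^{2π} q(t) dt = 0, and define G(φ) := −∫₀^{φ} q(t) dt for φ ∈ [0,2π], so that G(0) = G(2π) = 0. Then for every 1-Lipschitz function v : [0,2π] → ℝ with v(0) = v(2π) and every β ∈ ℝ, ∫₀^{2π} q(φ) v(φ) dφ ≥ −∫₀^{2π} |G(φ) − β| dφ. -/
open Real MeasureTheory

section

variable {q v : ℝ → ℝ} {a b : ℝ}

theorem integral_mul_eq_sub_integral_primitive_mul_deriv (hq : IntervalIntegrable q volume a b)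
    (hv : AbsolutelyContinuousOnInterval v a b) :
    ∫ x in a..b, q x * v x =
      (∫ x in a..b, q x) * v b - ∫ x in a..b, (∫ t in a..x, q t) * deriv v x := by
  have hderiv : ∫ x in a..b, deriv (fun y ↦ ∫ t in a..y, q t) x * v x = ∫ x in a..b, q x * v x := by
    refine intervalIntegral.integral_congr_ae ?_
    filter_upwards [hq.ae_hasDerivAt_integral] with x hx hxmem
    rw [(hx (Set.uIoc_subset_uIcc hxmem) a Set.left_mem_uIcc).deriv]
  have hparts := (hq.absolutelyContinuousOnInterval_intervalIntegral
    Set.left_mem_uIcc).integral_mul_deriv_eq_deriv_mul hv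
  rw [hderiv, intervalIntegral.integral_same, zero_mul, sub_zero] at hparts
  rw [hparts, sub_sub_cancel]

theorem integral_mul_eq_integral_neg_primitive_sub_const_mul_deriv
    (hq : IntervalIntegrable q volume a b) (hq0 : ∫ x in a..b, q x = 0)
    (hv : AbsolutelyContinuousOnInterval v a b) (hvab : v a = v b) (c : ℝ) :
    ∫ x in a..b, q x * v x = ∫ x in a..b, (-(∫ t in a..x, q t) - c) * deriv v x := by
  have hQ : ContinuousOn (fun x ↦ ∫ t in a..x, q t) (Set.uIcc a b) :=
    (hq.absolutelyContinuousOnInterval_intervalIntegral Set.left_mem_uIcc).continuousOn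
  have hv' : IntervalIntegrable (deriv v) volume a b := hv.intervalIntegrable_deriv
  have hconst : ∫ x in a..b, c * deriv v x = 0 := by
    rw [intervalIntegral.integral_const_mul, hv.integral_deriv_eq_sub, hvab, sub_self, mul_zero]
  calc ∫ x in a..b, q x * v x
      = -((∫ x in a..b, c * deriv v x) + ∫ x in a..b, (∫ t in a..x, q t) * deriv v x) := by
        rw [integral_mul_eq_sub_integral_primitive_mul_deriv hq hv, hq0, hconst, zero_mul, zero_sub,
          zero_add]
    _ = ∫ x in a..b, (-(∫ t in a..x, q t) - c) * deriv v x := by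
        simp_rw [neg_sub_left, neg_mul, add_mul]
        rw [intervalIntegral.integral_neg,
          intervalIntegral.integral_add (hv'.const_mul c) (hv'.continuousOn_mul hQ)]

end

theorem norm_integral_smul_deriv_le_of_lipschitzOnWith {F : Type*} [NormedAddCommGroup F]
    [NormedSpace ℝ F] {g : ℝ → ℝ} {v : ℝ → F} {a b : ℝ} {K : NNReal} (hab : a ≤ b)
    (hg : IntervalIntegrable g volume a b) (hv : LipschitzOnWith K v (Set.Icc a b)) :
    ‖∫ x in a..b, g x • deriv v x‖ ≤ K * ∫ x in a..b, |g x| := by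
  rw [← intervalIntegral.integral_const_mul]
  refine intervalIntegral.norm_integral_le_of_norm_le hab ?_ (hg.abs.const_mul _)
  filter_upwards [Measure.ae_ne volume b] with x hxb hx
  have hderiv : ‖deriv v x‖ ≤ K :=
    norm_deriv_le_of_lipschitzOn (Icc_mem_nhds hx.1 (hx.2.lt_of_ne hxb)) hv
  calc ‖g x • deriv v x‖ = ‖deriv v x‖ * |g x| := by rw [norm_smul, norm_eq_abs, mul_comm]
    _ ≤ K * |g x| := by gcongr

theorem integral_q_mul_ge_neg_integral_abs_general {a b : ℝ} (hab : a ≤ b) {q : ℝ → ℝ}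
    (hq : IntervalIntegrable q volume a b) (hq0 : ∫ t in a..b, q t = 0)
    {G : ℝ → ℝ} (hG : ∀ x ∈ Set.Icc a b, G x = -∫ t in a..x, q t)
    {K : NNReal} {v : ℝ → ℝ} (hv : LipschitzOnWith K v (Set.Icc a b)) (hvab : v a = v b) (β : ℝ) :
    |∫ x in a..b, q x * v x| ≤ K * ∫ x in a..b, |G x - β| := by
  rw [← Set.uIcc_of_le hab] at hG
  have hvac : AbsolutelyContinuousOnInterval v a b :=
    LipschitzOnWith.absolutelyContinuousOnInterval (by rwa [Set.uIcc_of_le hab])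
  have hGcont : ContinuousOn G (Set.uIcc a b) :=
    (hq.absolutelyContinuousOnInterval_intervalIntegral
      Set.left_mem_uIcc).continuousOn.neg.congr hG
  have hparts : ∫ x in a..b, q x * v x = ∫ x in a..b, (G x - β) * deriv v x := by
    rw [integral_mul_eq_integral_neg_primitive_sub_const_mul_deriv hq hq0 hvac hvab β]
    exact intervalIntegral.integral_congr fun x hx ↦ by simp only [hG x hx]
  rw [hparts]
  exact norm_integral_smul_deriv_le_of_lipschitzOnWith hab
    (hGcont.sub continuousOn_const).intervalIntegrable hv

/-- Key lower bound: if `q` is integrable on `(0,2π)` with `∫₀^{2π} q = 0`, and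
`G(φ) = −∫₀^φ q`, then for every `1`-Lipschitz `v : [0,2π] → ℝ` with `v(0) = v(2π)`
and every `β ∈ ℝ`, one has `∫₀^{2π} q v ≥ −∫₀^{2π} |G − β|`. -/
theorem integral_q_mul_ge_neg_integral_abs
    (q : ℝ → ℝ) (hq : IntegrableOn q (Set.Ioo 0 (2 * π)))
    (hq0 : (∫ t in (0 : ℝ)..(2 * π), q t) = 0)
    (G : ℝ → ℝ) (hG : ∀ φ : ℝ, G φ = -∫ t in (0 : ℝ)..φ, q t)
    (v : ℝ → ℝ) (hv : LipschitzOnWith 1 v (Set.Icc 0 (2 * π)))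
    (hvper : v 0 = v (2 * π)) (β : ℝ) :
    (∫ φ in (0 : ℝ)..(2 * π), q φ * v φ) ≥ -∫ φ in (0 : ℝ)..(2 * π), |G φ - β| := by
  have hqi := (intervalIntegrable_iff_integrableOn_Ioo_of_le two_pi_pos.le).2 hq
  simpa only [NNReal.coe_one, one_mul] using neg_le_of_abs_le
    (integral_q_mul_ge_neg_integral_abs_general two_pi_pos.le hqi hq0 (fun φ _ ↦ hG φ) hv hvper β)
end

section
/- Let q : (0,2π) → ℝ be Lebesgue integrable with ∫₀^{2π} q(t) dt = 0, set G(φ) := −∫₀^{φ} q(t) dt, let β* := sup{r ∈ ℝ : |{φ ∈ (0,2π) : G(φ) < r}| ≤ π}, set O₊ := {φ : G(φ) > β*}, O₋ := {φ : G(φ) < β*}, O₀ := {φ : G(φ) = β*}, and let k := 0 if |O₀| = 0 and k := (|O₊| − |O₋|)/|O₀| otherwise. Define ḡ(φ) := ∫₀^{φ} (1_{O₋}(t) − 1_{O₊}(t) + k·1_{O₀}(t)) dt. Then ∫₀^{2π} q(φ) ḡ(φ) dφ = −∫₀^{2π} |G(φ) − β*| dφ, and ḡ(2π) = ḡ(0)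 = 0. -/
open Real MeasureTheory

/-!
Since `β` is a median of `G`, the set `{G = β}` carries enough mass to balance `{G < β}` against
`{G > β}`: the choice of `k` makes the density `h = 1_{G < β} - 1_{G > β} + k 1_{G = β}` of `g` have
integral zero, and when `{G = β}` is null the other two sets already have equal measure. Hence `g`
vanishes at both endpoints, and integrating by parts with `G' = -q` leaves no boundary term:
`∫ q g = ∫ G h = ∫ (G - β) h = -∫ |G - β|`, the last step because `(G - β) h = -|G - β|` pointwise.
-/

open Set Filter
open scoped Topology ENNReal

section LevelSets

variable {α ι : Type*} [MeasurableSpace α] {μ : Measure α} [LinearOrder ι] [TopologicalSpace ι]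
  [OrderTopology ι] [FirstCountableTopology ι] [DenselyOrdered ι] {f : α → ι} {m : ι} {c : ℝ≥0∞}

theorem measure_lt_le_of_forall_lt [NoMinOrder ι] (h : ∀ r < m, μ {x | f x ≤ r} ≤ c) :
    μ {x | f x < m} ≤ c := by
  obtain ⟨u, hu_mono, hu_lt, hu_lim⟩ := exists_seq_strictMono_tendsto m
  have hunion : {x | f x < m} = ⋃ n, {x | f x ≤ u n} := by
    ext x
    simp only [mem_ofPred_eq, mem_iUnion]
    exact ⟨fun hx ↦ (hu_lim.eventually_const_le hx).exists, fun ⟨n, hn⟩ ↦ hn.trans_lt (hu_lt n)⟩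
  have hmono : Monotone fun n ↦ {x | f x ≤ u n} :=
    fun _ _ hij _ hx ↦ le_trans hx (hu_mono.monotone hij)
  rw [hunion, hmono.measure_iUnion]
  exact iSup_le fun n ↦ h _ (hu_lt n)

theorem measure_gt_le_of_forall_gt [NoMaxOrder ι] (h : ∀ r > m, μ {x | r ≤ f x} ≤ c) :
    μ {x | m < f x} ≤ c :=
  measure_lt_le_of_forall_lt (ι := ιᵒᵈ) h

end LevelSets

section Median

variable {α : Type*} [MeasurableSpace α] {μ : Measure α} {f : α → ℝ} {m : ℝ} {c : ℝ≥0∞}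

/-- `m` is a median of `f` under the (not necessarily normalised) measure `μ`: at most half of the
total mass lies strictly on either side of the level `m`. -/
def IsMedian (μ : Measure α) (f : α → ℝ) (m : ℝ) : Prop :=
  μ {x | f x < m} ≤ μ univ / 2 ∧ μ {x | m < f x} ≤ μ univ / 2

variable [IsFiniteMeasure μ]

theorem isLUB_sSup_measure_lt_le (hf : AEMeasurable f μ) (hc₀ : 0 < c) (hc : c < μ univ) :
    IsLUB {r | μ {x | f x < r} ≤ c} (sSup {r | μ {x | f x < r} ≤ c}) := by
  have hmono : Monotone fun r ↦ {x | f x < r} := fun _ _ hrs _ hx ↦ lt_of_lt_of_le hx hrs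
  have hbot : Tendsto (fun r ↦ μ {x | f x < r}) atBot (𝓝 0) := by
    have hinter : ⋂ r, {x | f x < r} = ∅ :=
      eq_empty_of_forall_notMem fun x hx ↦ lt_irrefl (f x) (mem_iInter.mp hx (f x))
    rw [← measure_empty (μ := μ), ← hinter]
    exact tendsto_measure_iInter_atBot (fun _ ↦ nullMeasurableSet_lt hf aemeasurable_const) hmono
      ⟨0, measure_ne_top _ _⟩
  have htop : Tendsto (fun r ↦ μ {x | f x < r}) atTop (𝓝 (μ univ)) := by
    have hunion : ⋃ r, {x | f x < r} = univ :=
      eq_univ_of_forall fun x ↦ mem_iUnion.mpr (exists_gt (f x))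
    rw [← hunion]
    exact tendsto_measure_iUnion_atTop hmono
  obtain ⟨R, hR⟩ := (htop.eventually_const_lt hc).exists
  refine isLUB_csSup (hbot.eventually_le_const hc₀).exists ⟨R, fun r hr ↦ ?_⟩
  by_contra! hRr
  exact (hR.trans_le (measure_mono (hmono hRr.le))).not_ge hr

theorem isMedian_of_isLUB (hf : AEMeasurable f μ)
    (hm : IsLUB {r | μ {x | f x < r} ≤ μ univ / 2} m) : IsMedian μ f m := by
  refine ⟨measure_lt_le_of_forall_lt fun r hr ↦ ?_, measure_gt_le_of_forall_gt fun r hr ↦ ?_⟩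
  · obtain ⟨s, hs, hrs, -⟩ := hm.exists_between hr
    exact (measure_mono fun x hx ↦ lt_of_le_of_lt hx hrs).trans hs
  · have hlt : μ univ / 2 < μ {x | f x < r} := not_le.mp fun hr' ↦ hr.not_ge (hm.1 hr')
    have hcompl : {x | r ≤ f x} = {x | f x < r}ᶜ := by ext; simp
    calc μ {x | r ≤ f x} = μ univ - μ {x | f x < r} := by
          rw [hcompl, measure_compl₀ (nullMeasurableSet_lt hf aemeasurable_const)
            (measure_ne_top _ _)]
      _ ≤ μ univ - μ univ / 2 := tsub_le_tsub_left hlt.le _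
      _ = μ univ / 2 := ENNReal.sub_half (measure_ne_top _ _)

theorem isMedian_sSup [NeZero μ] (hf : AEMeasurable f μ) :
    IsMedian μ f (sSup {r | μ {x | f x < r} ≤ μ univ / 2}) :=
  have hpos : μ univ ≠ 0 := NeZero.ne _
  isMedian_of_isLUB hf <| isLUB_sSup_measure_lt_le hf (ENNReal.half_pos hpos)
    (ENNReal.half_lt_self hpos (measure_ne_top _ _))

theorem measureReal_lt_add_eq_add_gt (hf : AEMeasurable f μ) (m : ℝ) :
    μ.real {x | f x < m} + μ.real {x | f x = m} + μ.real {x | m < f x} = μ.real univ := by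
  have hle : {x | f x < m} ∪ {x | f x = m} = {x | m < f x}ᶜ := by ext; simp [le_iff_lt_or_eq]
  rw [← measureReal_union₀ (nullMeasurableSet_eq_fun hf aemeasurable_const), hle, add_comm,
    measureReal_add_measureReal_compl₀ (nullMeasurableSet_lt aemeasurable_const hf)]
  exact (disjoint_left.mpr fun x (hlt : f x < m) (heq : f x = m) ↦ hlt.ne heq).aedisjoint

theorem IsMedian.measureReal_lt_eq_gt (hm : IsMedian μ f m) (hf : AEMeasurable f μ)
    (h₀ : μ {x | f x = m} = 0) : μ.real {x | f x < m} = μ.real {x | m < f x} := by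
  have hhalf : ∀ s, μ s ≤ μ univ / 2 → μ.real s ≤ μ.real univ / 2 := fun s hs ↦ by
    simpa [Measure.real] using ENNReal.toReal_mono (by finiteness) hs
  have htotal := measureReal_lt_add_eq_add_gt hf m
  rw [(measureReal_eq_zero_iff (s := {x | f x = m})).mpr h₀] at htotal
  linarith [hhalf _ hm.1, hhalf _ hm.2]

end Median

section DescentSign

variable {α : Type*} {f : α → ℝ} {m k : ℝ}

/-- The density of the optimal descent direction at level `m`: it is `1` below the level, `-1`
above it, and takes the free value `k` on the level set `{f = m}`. -/
noncomputable def descentSign (f : α → ℝ) (m k : ℝ) (x : α) : ℝ :=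
  {x | f x < m}.indicator (fun _ ↦ 1) x - {x | m < f x}.indicator (fun _ ↦ 1) x +
    k * {x | f x = m}.indicator (fun _ ↦ 1) x

theorem mul_descentSign (f : α → ℝ) (m k : ℝ) (x : α) :
    f x * descentSign f m k x = m * descentSign f m k x - |f x - m| := by
  rcases lt_trichotomy (f x) m with h | h | h
  · have hval : descentSign f m k x = 1 := by simp [descentSign, h, h.not_gt, h.ne]
    rw [hval, abs_of_neg (sub_neg.mpr h)]
    ring
  · rw [h, sub_self, abs_zero, sub_zero]
  · have hval : descentSign f m k x = -1 := by simp [descentSign, h, h.not_gt, h.ne']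
    rw [hval, abs_of_pos (sub_pos.mpr h)]
    ring

variable [MeasurableSpace α] {μ : Measure α} [IsFiniteMeasure μ]

theorem integrable_descentSign (hf : AEMeasurable f μ) (m k : ℝ) :
    Integrable (descentSign f m k) μ :=
  (((integrable_const 1).indicator₀ (nullMeasurableSet_lt hf aemeasurable_const)).sub
    ((integrable_const 1).indicator₀ (nullMeasurableSet_lt aemeasurable_const hf))).add
    (((integrable_const 1).indicator₀ (nullMeasurableSet_eq_fun hf aemeasurable_const)).const_mul k)

theorem integral_descentSign (hf : AEMeasurable f μ) (m k : ℝ) :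
    ∫ x, descentSign f m k x ∂μ =
      μ.real {x | f x < m} - μ.real {x | m < f x} + k * μ.real {x | f x = m} := by
  have hlt := nullMeasurableSet_lt hf (aemeasurable_const (b := m))
  have hgt := nullMeasurableSet_lt (aemeasurable_const (b := m)) hf
  have heq := nullMeasurableSet_eq_fun hf (aemeasurable_const (b := m))
  have hint {s : Set α} (hs : NullMeasurableSet s μ) : Integrable (s.indicator fun _ ↦ (1 : ℝ)) μ :=
    (integrable_const 1).indicator₀ hs
  have hval {s : Set α} (hs : NullMeasurableSet s μ) :
      ∫ x, s.indicator (fun _ ↦ (1 : ℝ)) x ∂μ = μ.real s := by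
    rw [integral_indicator₀ hs, setIntegral_const, smul_eq_mul, mul_one]
  simp only [descentSign]
  rw [integral_add, integral_sub, integral_const_mul, hval hlt, hval hgt, hval heq]
  exacts [hint hlt, hint hgt, (hint hlt).sub (hint hgt), (hint heq).const_mul k]

namespace IsMedian

theorem integral_descentSign_eq_zero (hm : IsMedian μ f m) (hf : AEMeasurable f μ)
    (hk : μ {x | f x = m} ≠ 0 →
      k = (μ.real {x | m < f x} - μ.real {x | f x < m}) / μ.real {x | f x = m}) :
    ∫ x, descentSign f m k x ∂μ = 0 := by
  rw [integral_descentSign hf]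
  by_cases h₀ : μ {x | f x = m} = 0
  · rw [hm.measureReal_lt_eq_gt hf h₀, (measureReal_eq_zero_iff).mpr h₀]
    ring
  · rw [hk h₀, div_mul_cancel₀ _ ((measureReal_eq_zero_iff).not.mpr h₀)]
    ring

theorem integral_mul_descentSign (hm : IsMedian μ f m) (hf : Integrable f μ)
    (hk : μ {x | f x = m} ≠ 0 →
      k = (μ.real {x | m < f x} - μ.real {x | f x < m}) / μ.real {x | f x = m}) :
    ∫ x, f x * descentSign f m k x ∂μ = -∫ x, |f x - m| ∂μ := by
  simp only [mul_descentSign]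
  rw [integral_sub, integral_const_mul, hm.integral_descentSign_eq_zero hf.aemeasurable hk,
    mul_zero, zero_sub]
  exacts [(integrable_descentSign hf.aemeasurable m k).const_mul m,
    (hf.sub (integrable_const m)).abs]

end IsMedian

end DescentSign

section Primitive

variable {a b : ℝ} {u v : ℝ → ℝ}

theorem ae_deriv_integral_eq (hu : IntervalIntegrable u volume a b) :
    ∀ᵐ x, x ∈ uIoc a b → deriv (fun y ↦ ∫ t in a..y, u t) x = u x := by
  filter_upwards [hu.ae_hasDerivAt_integral] with x hx hxab
  exact (hx (uIoc_subset_uIcc hxab) a left_mem_uIcc).deriv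

theorem integral_mul_integral_eq_sub (hu : IntervalIntegrable u volume a b)
    (hv : IntervalIntegrable v volume a b) :
    ∫ x in a..b, u x * ∫ t in a..x, v t =
      (∫ x in a..b, u x) * (∫ x in a..b, v x) - ∫ x in a..b, (∫ t in a..x, u t) * v x := by
  have hparts := (hu.absolutelyContinuousOnInterval_intervalIntegral
    left_mem_uIcc).integral_mul_deriv_eq_deriv_mul
      (hv.absolutelyContinuousOnInterval_intervalIntegral left_mem_uIcc)
  have hderiv_u : ∫ x in a..b, deriv (fun y ↦ ∫ t in a..y, u t) x * (∫ t in a..x, v t) =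
      ∫ x in a..b, u x * ∫ t in a..x, v t :=
    intervalIntegral.integral_congr_ae <| (ae_deriv_integral_eq hu).mono fun x hx hxab ↦ by
      rw [hx hxab]
  have hderiv_v : ∫ x in a..b, (∫ t in a..x, u t) * deriv (fun y ↦ ∫ t in a..y, v t) x =
      ∫ x in a..b, (∫ t in a..x, u t) * v x :=
    intervalIntegral.integral_congr_ae <| (ae_deriv_integral_eq hv).mono fun x hx hxab ↦ by
      rw [hx hxab]
  rw [hderiv_u, hderiv_v, intervalIntegral.integral_same, zero_mul, sub_zero] at hparts
  linarith

theorem integral_mul_integral_of_eq_neg_integral {U : ℝ → ℝ} (hu : IntervalIntegrable u volume a b)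
    (hv : IntervalIntegrable v volume a b) (hU : ∀ x ∈ uIcc a b, U x = -∫ t in a..x, u t)
    (hv₀ : ∫ x in a..b, v x = 0) :
    ∫ x in a..b, u x * ∫ t in a..x, v t = ∫ x in a..b, U x * v x := by
  rw [integral_mul_integral_eq_sub hu hv, hv₀, mul_zero, zero_sub, ← intervalIntegral.integral_neg]
  exact intervalIntegral.integral_congr fun x hx ↦ by simp only [hU x hx, neg_mul]

end Primitive

section Interval

variable {a b β k : ℝ} {q G : ℝ → ℝ}

theorem measure_restrict_setOf {α : Type*} [MeasurableSpace α] {s : Set α} (hs : MeasurableSet s)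
    (μ : Measure α) (p : α → Prop) : μ.restrict s {x | p x} = μ {x ∈ s | p x} := by
  rw [Measure.restrict_apply' hs, inter_comm]
  rfl

theorem intervalIntegral_eq_integral_Ioo {E : Type*} [NormedAddCommGroup E] [NormedSpace ℝ E]
    {μ : Measure ℝ} [NullSingletonClass μ] (hab : a ≤ b) (u : ℝ → E) :
    ∫ x in a..b, u x ∂μ = ∫ x in Ioo a b, u x ∂μ := by
  rw [intervalIntegral.integral_of_le hab, integral_Ioc_eq_integral_Ioo]

theorem integrableOn_of_eq_neg_integral (hab : a ≤ b) (hq : IntegrableOn q (Ioo a b))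
    (hG : ∀ x ∈ Icc a b, G x = -∫ t in a..x, q t) : IntegrableOn G (Ioo a b) := by
  have hcont := intervalIntegral.continuousOn_primitive_interval'
    ((intervalIntegrable_iff_integrableOn_Ioo_of_le hab).mpr hq) left_mem_uIcc
  rw [uIcc_of_le hab] at hcont
  exact (hcont.neg.congr hG).integrableOn_Icc.mono_set Ioo_subset_Icc_self

theorem isMedian_sSup_Ioo (hab : a < b) (hG : AEMeasurable G (volume.restrict (Ioo a b))) :
    IsMedian (volume.restrict (Ioo a b)) G
      (sSup {r | volume {x ∈ Ioo a b | G x < r} ≤ ENNReal.ofReal ((b - a) / 2)}) := by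
  have : NeZero (volume.restrict (Ioo a b)) := ⟨by simpa [Measure.restrict_eq_zero] using hab⟩
  have hmass : volume.restrict (Ioo a b) univ / 2 = ENNReal.ofReal ((b - a) / 2) := by
    rw [Measure.restrict_apply_univ, Real.volume_Ioo, ENNReal.ofReal_div_of_pos two_pos,
      ENNReal.ofReal_ofNat]
  simpa only [measure_restrict_setOf measurableSet_Ioo, hmass] using isMedian_sSup hG

theorem integral_indicator_eq_integral_descentSign {φ : ℝ} (hφ : φ ∈ Icc a b) :
    ∫ t in a..φ, ({x ∈ Ioo a b | G x < β}.indicator (fun _ ↦ (1 : ℝ)) t -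
        {x ∈ Ioo a b | β < G x}.indicator (fun _ ↦ (1 : ℝ)) t +
        k * {x ∈ Ioo a b | G x = β}.indicator (fun _ ↦ (1 : ℝ)) t) =
      ∫ t in a..φ, descentSign G β k t := by
  refine intervalIntegral.integral_congr_Ioo_of_le hφ.1 fun t ht ↦ ?_
  have htab : t ∈ Ioo a b := Ioo_subset_Ioo_right hφ.2 ht
  simp only [descentSign, indicator, mem_ofPred_eq, htab, true_and]

end Interval

theorem optimal_direction_saturates_general {a b : ℝ} (hab : a ≤ b)
    {q : ℝ → ℝ} (hq : IntegrableOn q (Ioo a b))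
    {G : ℝ → ℝ} (hG : ∀ φ ∈ Icc a b, G φ = -∫ t in a..φ, q t)
    {β : ℝ} (hβ : IsMedian (volume.restrict (Ioo a b)) G β)
    {Op Om Oz : Set ℝ}
    (hOp : Op = {φ ∈ Ioo a b | β < G φ})
    (hOm : Om = {φ ∈ Ioo a b | G φ < β})
    (hOz : Oz = {φ ∈ Ioo a b | G φ = β})
    {k : ℝ} (hk : volume Oz ≠ 0 → k = (volume.real Op - volume.real Om) / volume.real Oz)
    {g : ℝ → ℝ}
    (hg : ∀ φ ∈ Icc a b, g φ = ∫ t in a..φ,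
      (Om.indicator (fun _ ↦ (1 : ℝ)) t - Op.indicator (fun _ ↦ (1 : ℝ)) t +
        k * Oz.indicator (fun _ ↦ (1 : ℝ)) t)) :
    (∫ φ in a..b, q φ * g φ) = -(∫ φ in a..b, |G φ - β|) ∧ g b = 0 ∧ g a = 0 := by
  subst hOp hOm hOz
  have hGint : Integrable G (volume.restrict (Ioo a b)) := integrableOn_of_eq_neg_integral hab hq hG
  simp only [Measure.real, ← measure_restrict_setOf measurableSet_Ioo] at hk
  have hg_eq : ∀ φ ∈ Icc a b, g φ = ∫ t in a..φ, descentSign G β k t := fun φ hφ ↦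
    (hg φ hφ).trans (integral_indicator_eq_integral_descentSign hφ)
  have hzero : ∫ x in a..b, descentSign G β k x = 0 := by
    rw [intervalIntegral_eq_integral_Ioo hab]
    exact hβ.integral_descentSign_eq_zero hGint.aemeasurable hk
  have hds := integrable_descentSign hGint.aemeasurable β k
  have hii {u : ℝ → ℝ} : IntegrableOn u (Ioo a b) → IntervalIntegrable u volume a b :=
    (intervalIntegrable_iff_integrableOn_Ioo_of_le hab).mpr
  refine ⟨?_, by rw [hg_eq b (right_mem_Icc.mpr hab), hzero],
    by rw [hg_eq a (left_mem_Icc.mpr hab), intervalIntegral.integral_same]⟩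
  calc ∫ φ in a..b, q φ * g φ
      = ∫ φ in a..b, q φ * ∫ t in a..φ, descentSign G β k t :=
        intervalIntegral.integral_congr_Ioo_of_le hab fun φ hφ ↦ by
          simp only [hg_eq φ (Ioo_subset_Icc_self hφ)]
    _ = ∫ φ in a..b, G φ * descentSign G β k φ :=
        integral_mul_integral_of_eq_neg_integral (hii hq) (hii hds) (uIcc_of_le hab ▸ hG) hzero
    _ = -∫ φ in a..b, |G φ - β| := by
        simp only [intervalIntegral_eq_integral_Ioo hab]
        exact hβ.integral_mul_descentSign hGint hk

/-- The optimal descent direction `ḡ` built from the median level `β*` of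
`G(φ) = −∫₀^φ q` saturates the lower bound: `∫₀^{2π} q ḡ = −∫₀^{2π} |G − β*|`,
and `ḡ(2π) = ḡ(0) = 0`. -/
theorem optimal_direction_saturates
    (q : ℝ → ℝ) (hq : IntegrableOn q (Set.Ioo 0 (2 * π)))
    (hq0 : (∫ t in (0 : ℝ)..(2 * π), q t) = 0)
    (G : ℝ → ℝ) (hG : ∀ φ : ℝ, G φ = -∫ t in (0 : ℝ)..φ, q t)
    (β : ℝ)
    (hβ : β = sSup {r : ℝ |
      volume {φ ∈ Set.Ioo (0 : ℝ) (2 * π) | G φ < r} ≤ ENNReal.ofReal π})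
    (Op Om Oz : Set ℝ)
    (hOp : Op = {φ ∈ Set.Ioo (0 : ℝ) (2 * π) | G φ > β})
    (hOm : Om = {φ ∈ Set.Ioo (0 : ℝ) (2 * π) | G φ < β})
    (hOz : Oz = {φ ∈ Set.Ioo (0 : ℝ) (2 * π) | G φ = β})
    (k : ℝ)
    (hk0 : volume Oz = 0 → k = 0)
    (hk1 : volume Oz ≠ 0 → k = ((volume Op).toReal - (volume Om).toReal) / (volume Oz).toReal)
    (g : ℝ → ℝ)
    (hg : ∀ φ : ℝ, g φ = ∫ t in (0 : ℝ)..φ,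
      (Om.indicator (fun _ => (1 : ℝ)) t - Op.indicator (fun _ => (1 : ℝ)) t +
        k * Oz.indicator (fun _ => (1 : ℝ)) t)) :
    (∫ φ in (0 : ℝ)..(2 * π), q φ * g φ) = -(∫ φ in (0 : ℝ)..(2 * π), |G φ - β|) ∧
      g (2 * π) = 0 ∧ g 0 = 0 := by
  have hGint := integrableOn_of_eq_neg_integral two_pi_pos.le hq fun φ _ ↦ hG φ
  have hmed : IsMedian (volume.restrict (Ioo 0 (2 * π))) G β := by
    simpa [hβ] using isMedian_sSup_Ioo two_pi_pos hGint.aemeasurable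
  exact optimal_direction_saturates_general two_pi_pos.le hq (fun φ _ ↦ hG φ) hmed hOp hOm hOz hk1
    fun φ _ ↦ hg φ
end

section
/- Let N ∈ ℕ, let C : Fin N × Fin N → ℝ be nonnegative, and let a : Fin N → ℝ satisfy Σᵢ aᵢ = 0. Set N⁺ := {i : aᵢ > 0} and N⁻ := {j : aⱼ < 0}. Then the maximum of Σ_{i ∈ N⁺} aᵢ ξᵢ + Σ_{j ∈ N⁻} aⱼ ξⱼ over all ξ : Fin N → ℝ satisfying ξᵢ − ξⱼ ≤ C_{ij} for all (i,j) ∈ N⁺ × N⁻ equals the minimum of Σ_{i ∈ N⁺} Σ_{j ∈ N⁻} C_{ij} P_{ij} over all matrices P with P_{ij} ≥ 0, Σ_{j ∈ N⁻} P_{ij} = aᵢ for every i ∈ N⁺, and Σ_{i ∈ N⁺} P_{ij} = −aⱼ for every j ∈ N⁻; moreover both the maximum and the minimum are attained. -/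
open Finset

/-!
Strong duality for finite linear programs follows algebraically from Farkas' lemma: if no feasible
primal-dual pair had equal values, the system asking for one would be infeasible, and a Farkas
certificate of this contradicts weak duality. Maximising `∑ μᵢ φᵢ - ∑ νⱼ ψⱼ` subject to
`φᵢ - ψⱼ ≤ cᵢⱼ` is such a program, and its multipliers are exactly the transport plans from `μ`
to `ν`. Both programs are feasible: the product coupling is a plan, and sufficiently negative `φ`
together with `ψ = 0` satisfy the constraints. Since the positive and negative supports of `a` are
disjoint, `φ` and `ψ` glue to a single potential.
-/

theorem exists_nonneg_sum_insert_smul_eq {R M ι : Type*} [Semiring R] [LE R] [AddCommMonoid M]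
    [Module R M] [DecidableEq ι] {s : Finset ι} {k : ι} {w : ι → R} {r : R} (f : ι → M)
    (hk : k ∉ s) (hr : 0 ≤ r) (hw : ∀ i ∈ s, 0 ≤ w i) :
    ∃ v : ι → R, (∀ i ∈ insert k s, 0 ≤ v i) ∧
      ∑ i ∈ insert k s, v i • f i = r • f k + ∑ i ∈ s, w i • f i := by
  have hne : ∀ i ∈ s, i ≠ k := fun i hi ↦ ne_of_mem_of_not_mem hi hk
  refine ⟨Function.update w k r, ?_, ?_⟩
  · simpa +contextual [hne, hr] using hw
  · rw [sum_insert hk, Function.update_self]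
    exact congrArg (r • f k + ·) (sum_congr rfl fun i hi ↦ by
      rw [Function.update_of_ne (hne i hi)])

section Multipliers

variable {R M ι : Type*} [CommRing R] [AddCommGroup M] [Module R M]

theorem sum_smul_apply_le [PartialOrder R] [IsOrderedRing R] {s : Finset ι}
    {f : ι → Module.Dual R M} {b w : ι → R} {x : M}
    (hx : ∀ i ∈ s, f i x ≤ b i) (hw : ∀ i ∈ s, 0 ≤ w i) :
    (∑ i ∈ s, w i • f i) x ≤ ∑ i ∈ s, w i * b i := by
  simp only [LinearMap.coe_sum, LinearMap.coe_smul, Finset.sum_apply, Pi.smul_apply, smul_eq_mul]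
  exact sum_le_sum fun i hi ↦ mul_le_mul_of_nonneg_left (hx i hi) (hw i hi)

theorem mul_sum_le_of_multipliers [LinearOrder R] [IsStrictOrderedRing R] {s : Finset ι}
    {f : ι → Module.Dual R M} {b : ι → R} {g : Module.Dual R M} {x : M} {w p q : ι → R} {r : R}
    (hx : ∀ i ∈ s, f i x ≤ b i) (hw : ∀ i ∈ s, 0 ≤ w i) (hwg : ∑ i ∈ s, w i • f i = g)
    (hr : 0 ≤ r) (hp : ∀ i ∈ s, 0 ≤ p i) (hq : ∀ i ∈ s, 0 ≤ q i)
    (hpg : ∑ i ∈ s, p i • f i = r • g)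
    (hqb : ∀ u : ι → R, ∑ i ∈ s, u i • f i = 0 → ∑ i ∈ s, q i * u i = r * ∑ i ∈ s, u i * b i) :
    r * ∑ i ∈ s, w i * b i ≤ ∑ i ∈ s, p i * b i + ∑ i ∈ s, q i * w i := by
  obtain rfl | hr := hr.eq_or_lt
  · have hpb : 0 ≤ ∑ i ∈ s, p i * b i := by simpa [hpg] using sum_smul_apply_le hx hp
    have hqw : 0 ≤ ∑ i ∈ s, q i * w i := sum_nonneg fun i hi ↦ mul_nonneg (hq i hi) (hw i hi)
    simpa using add_nonneg hpb hqw
  · have hker : ∑ i ∈ s, (p i - r * w i) • f i = 0 := calc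
      _ = ∑ i ∈ s, p i • f i - r • ∑ i ∈ s, w i • f i := by
        rw [smul_sum, ← sum_sub_distrib]
        exact sum_congr rfl fun i _ ↦ by module
      _ = 0 := by rw [hpg, hwg, sub_self]
    have hqp : 0 ≤ ∑ i ∈ s, q i * p i := sum_nonneg fun i hi ↦ mul_nonneg (hq i hi) (hp i hi)
    have key := hqb _ hker
    simp only [mul_sub, sub_mul, sum_sub_distrib, mul_assoc, mul_left_comm _ r, ← mul_sum] at key
    refine le_of_mul_le_mul_left ?_ hr
    linarith

end Multipliers

section LinearProgramming

variable {K V ι : Type*} [Field K] [LinearOrder K] [IsStrictOrderedRing K]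
  [AddCommGroup V] [Module K V]

theorem farkas (s : Finset ι) (f : ι → Module.Dual K V) (g : Module.Dual K V)
    (h : ∀ x, (∀ i ∈ s, 0 ≤ f i x) → 0 ≤ g x) :
    ∃ w : ι → K, (∀ i ∈ s, 0 ≤ w i) ∧ ∑ i ∈ s, w i • f i = g := by
  classical
  induction s using Finset.induction_on generalizing f g with
  | empty =>
    have hg : g = 0 := LinearMap.ext fun x ↦
      le_antisymm (by simpa using h (-x) (by simp)) (h x (by simp))
    exact ⟨0, by simp, by simp [hg]⟩
  | insert k s hk ih =>
    suffices ∃ (r : K) (w : ι → K), 0 ≤ r ∧ (∀ i ∈ s, 0 ≤ w i) ∧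
        r • f k + ∑ i ∈ s, w i • f i = g by
      obtain ⟨r, w, hr, hw, hwg⟩ := this
      simpa only [hwg] using exists_nonneg_sum_insert_smul_eq f hk hr hw
    by_cases hs : ∀ x, (∀ i ∈ s, 0 ≤ f i x) → 0 ≤ g x
    · obtain ⟨w, hw, hwg⟩ := ih f g hs
      exact ⟨0, w, le_rfl, hw, by simpa using hwg⟩
    push Not at hs
    obtain ⟨x, hfx, hgx⟩ := hs
    have hkx : f k x < 0 := by
      by_contra! hkx
      exact hgx.not_ge (h x (by simpa [hkx] using hfx))
    obtain ⟨w, hw, hwg⟩ := ih (fun i ↦ f i - (f i x / f k x) • f k) (g - (g x / f k x) • f k)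
      fun y hy ↦ by
        -- Moving `y` along `x` onto the hyperplane `f k = 0` makes the hypothesis applicable.
        have := h (y - (f k y / f k x) • x) fun i hi ↦ by
          obtain rfl | hi := mem_insert.1 hi
          · simp [hkx.ne]
          · simpa [div_mul_comm] using hy i hi
        simpa [div_mul_comm] using this
    refine ⟨g x / f k x - ∑ i ∈ s, w i * (f i x / f k x), w, ?_, hw, ?_⟩
    · have hsum : ∑ i ∈ s, w i * (f i x / f k x) ≤ 0 := sum_nonpos fun i hi ↦
        mul_nonpos_of_nonneg_of_nonpos (hw i hi) (div_nonpos_of_nonneg_of_nonpos (hfx i hi) hkx.le)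
      exact sub_nonneg.2 (hsum.trans (div_nonneg_of_nonpos hgx.le hkx.le))
    · refine LinearMap.ext fun y ↦ ?_
      have := LinearMap.congr_fun hwg y
      simp only [LinearMap.coe_sum, LinearMap.coe_smul, Finset.sum_apply, Pi.smul_apply,
        LinearMap.sub_apply, LinearMap.smul_apply, LinearMap.add_apply, smul_eq_mul, mul_sub,
        sub_mul, sum_mul, ← mul_assoc, sum_sub_distrib] at this ⊢
      linarith

theorem exists_infeasibility_certificate (s : Finset ι) (f : ι → Module.Dual K V) (b : ι → K)
    (h : ¬∃ x, ∀ i ∈ s, f i x ≤ b i) :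
    ∃ w : ι → K, (∀ i ∈ s, 0 ≤ w i) ∧ ∑ i ∈ s, w i • f i = 0 ∧ ∑ i ∈ s, w i * b i < 0 := by
  let homogenized (i : ι) : Module.Dual K (V × K) :=
    b i • LinearMap.snd K V K - f i ∘ₗ LinearMap.fst K V K
  obtain ⟨w, hw, hsum⟩ := farkas s homogenized (-LinearMap.snd K V K) fun ⟨x, r⟩ hx ↦ by
    by_contra! hr
    have hr : 0 < r := by simpa using hr
    refine h ⟨r⁻¹ • x, fun i hi ↦ ?_⟩
    simpa [homogenized, inv_mul_le_iff₀ hr, mul_comm r] using hx i hi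
  refine ⟨w, hw, LinearMap.ext fun x ↦ ?_, ?_⟩
  · simpa [homogenized] using LinearMap.congr_fun hsum (x, 0)
  · have : ∑ i ∈ s, w i * b i = -1 := by
      simpa [homogenized] using LinearMap.congr_fun hsum (0, 1)
    rw [this]
    exact neg_one_lt_zero

theorem exists_coupled_infeasibility_certificate {U κ : Type*} [AddCommGroup U] [Module K U]
    {s : Finset ι} {t : Finset κ} {f : ι → Module.Dual K V} {b : ι → K} {g : Module.Dual K V}
    {h : κ → Module.Dual K U} {d : κ → K} {k : Module.Dual K U} {γ : K}
    (hlt : ∀ x u, (∀ i ∈ s, f i x ≤ b i) → (∀ j ∈ t, d j ≤ h j u) → g x + γ < k u) :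
    ∃ (p : ι → K) (q : κ → K) (r : K), (∀ i ∈ s, 0 ≤ p i) ∧ (∀ j ∈ t, 0 ≤ q j) ∧ 0 ≤ r ∧
      ∑ i ∈ s, p i • f i = r • g ∧ ∑ j ∈ t, q j • h j = r • k ∧
      ∑ i ∈ s, p i * b i + r * γ < ∑ j ∈ t, q j * d j := by
  let constraint : Option (ι ⊕ κ) → Module.Dual K (V × U)
    | none => k ∘ₗ LinearMap.snd K V U - g ∘ₗ LinearMap.fst K V U
    | some (.inl i) => f i ∘ₗ LinearMap.fst K V U
    | some (.inr j) => -(h j ∘ₗ LinearMap.snd K V U)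
  let bound : Option (ι ⊕ κ) → K
    | none => γ
    | some (.inl i) => b i
    | some (.inr j) => -d j
  have hinfeasible : ¬∃ z, ∀ l ∈ insertNone (s.disjSum t), constraint l z ≤ bound l := by
    rintro ⟨⟨x, u⟩, hz⟩
    have hx : ∀ i ∈ s, f i x ≤ b i := fun i hi ↦ hz (some (.inl i)) (by simpa using hi)
    have hu : ∀ j ∈ t, d j ≤ h j u := fun j hj ↦
      neg_le_neg_iff.1 (hz (some (.inr j)) (by simpa using hj))
    have hgap : k u - g x ≤ γ := hz none (by simp)
    exact (hlt x u hx hu).not_ge (sub_le_iff_le_add'.1 hgap)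
  obtain ⟨m, hm, hzero, hneg⟩ := exists_infeasibility_certificate _ _ _ hinfeasible
  refine ⟨fun i ↦ m (some (.inl i)), fun j ↦ m (some (.inr j)), m none,
    fun i hi ↦ hm _ (by simpa using hi), fun j hj ↦ hm _ (by simpa using hj), hm _ (by simp),
    LinearMap.ext fun x ↦ ?_, LinearMap.ext fun u ↦ ?_, ?_⟩
  · simpa [constraint, neg_add_eq_zero, eq_comm (b := m none * g x)]
      using LinearMap.congr_fun hzero (x, 0)
  · simpa [constraint, ← sub_eq_add_neg, sub_eq_zero, eq_comm (a := m none * k u)]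
      using LinearMap.congr_fun hzero (0, u)
  · simpa [bound, ← sub_eq_add_neg, ← add_sub_assoc, add_comm] using hneg

theorem exists_multipliers_of_duality_gap {s : Finset ι} {f : ι → Module.Dual K V} {b : ι → K}
    {g : Module.Dual K V} {w : ι → K} (hwg : ∑ i ∈ s, w i • f i = g)
    (hgap : ∀ (x : V) (v : ι → K), (∀ i ∈ s, f i x ≤ b i) → (∀ i ∈ s, 0 ≤ v i) →
      ∑ i ∈ s, v i • f i = g → g x < ∑ i ∈ s, v i * b i) :
    ∃ (p q : ι → K) (r : K), (∀ i ∈ s, 0 ≤ p i) ∧ (∀ i ∈ s, 0 ≤ q i) ∧ 0 ≤ r ∧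
      ∑ i ∈ s, p i • f i = r • g ∧
      (∀ u : ι → K, ∑ i ∈ s, u i • f i = 0 → ∑ i ∈ s, q i * u i = r * ∑ i ∈ s, u i * b i) ∧
      ∑ i ∈ s, p i * b i + ∑ i ∈ s, q i * w i < r * ∑ i ∈ s, w i * b i := by
  -- The multipliers are `w + u` with `u` in the space `U` of linear relations among the `f i`.
  let U := LinearMap.ker (∑ i ∈ s, (LinearMap.proj i : (ι → K) →ₗ[K] K).smulRight (f i))
  have mem_U (u : ι → K) : u ∈ U ↔ ∑ i ∈ s, u i • f i = 0 := by simp [U]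
  let coord (i : ι) : Module.Dual K U := LinearMap.proj i ∘ₗ U.subtype
  let cost : Module.Dual K U := ∑ i ∈ s, b i • coord i
  have cost_apply (u : U) : cost u = ∑ i ∈ s, u.1 i * b i := by simp [cost, coord, mul_comm]
  obtain ⟨p, q, r, hp, hq, hr, hpg, hqb, hlt⟩ :=
    exists_coupled_infeasibility_certificate (s := s) (t := s) (f := f) (b := b) (g := g)
      (h := coord) (d := -w) (k := cost) (γ := -∑ i ∈ s, w i * b i) fun x u hx hu ↦ by
        have hv : ∀ i ∈ s, 0 ≤ (u.1 + w) i := fun i hi ↦ neg_le_iff_add_nonneg.1 (hu i hi)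
        have hvg : ∑ i ∈ s, (u.1 + w) i • f i = g := by
          simp [add_smul, sum_add_distrib, hwg, (mem_U u).1 u.2]
        rw [cost_apply, ← sub_eq_add_neg, sub_lt_iff_lt_add]
        simpa [add_mul, sum_add_distrib] using hgap x _ hx hv hvg
  refine ⟨p, q, r, hp, hq, hr, hpg, fun u hu ↦ ?_, ?_⟩
  · simpa [coord, cost_apply] using LinearMap.congr_fun hqb ⟨u, (mem_U u).2 hu⟩
  · simp only [Pi.neg_apply, mul_neg, sum_neg_distrib] at hlt
    linarith

theorem linear_programming_strong_duality {s : Finset ι} {f : ι → Module.Dual K V} {b : ι → K}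
    {g : Module.Dual K V} (hprimal : ∃ x, ∀ i ∈ s, f i x ≤ b i)
    (hdual : ∃ w : ι → K, (∀ i ∈ s, 0 ≤ w i) ∧ ∑ i ∈ s, w i • f i = g) :
    ∃ (x : V) (w : ι → K), (∀ i ∈ s, f i x ≤ b i) ∧ (∀ i ∈ s, 0 ≤ w i) ∧
      ∑ i ∈ s, w i • f i = g ∧ g x = ∑ i ∈ s, w i * b i := by
  obtain ⟨x, hx⟩ := hprimal
  obtain ⟨w, hw, hwg⟩ := hdual
  by_contra! hne
  obtain ⟨p, q, r, hp, hq, hr, hpg, hqb, hlt⟩ :=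
    exists_multipliers_of_duality_gap (b := b) hwg fun y v hy hv hvg ↦
      (hvg ▸ sum_smul_apply_le hy hv).lt_of_ne (hne y v hy hv hvg)
  exact hlt.not_ge (mul_sum_le_of_multipliers hx hw hwg hr hp hq hpg hqb)

end LinearProgramming

/-- `P` is a transport plan from the weights `μ` on `s` to the weights `ν` on `t`. It is a function
on all of `ι × κ`, but only its entries on `s × t` matter. -/
structure IsTransportPlan {K ι κ : Type*} [AddCommMonoid K] [LE K] (s : Finset ι) (t : Finset κ)
    (μ : ι → K) (ν : κ → K) (P : ι → κ → K) : Prop where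
  nonneg : ∀ i ∈ s, ∀ j ∈ t, 0 ≤ P i j
  sum_row : ∀ i ∈ s, ∑ j ∈ t, P i j = μ i
  sum_col : ∀ j ∈ t, ∑ i ∈ s, P i j = ν j

section WeakDuality

variable {R ι κ : Type*} [CommRing R] {s : Finset ι} {t : Finset κ}
  {μ : ι → R} {ν : κ → R} {P : ι → κ → R}

theorem IsTransportPlan.sum_mul_sub_sum_mul [LE R] (hP : IsTransportPlan s t μ ν P)
    (φ : ι → R) (ψ : κ → R) :
    ∑ i ∈ s, μ i * φ i - ∑ j ∈ t, ν j * ψ j = ∑ i ∈ s, ∑ j ∈ t, (φ i - ψ j) * P i j := by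
  have hφ : ∑ i ∈ s, μ i * φ i = ∑ i ∈ s, ∑ j ∈ t, φ i * P i j :=
    sum_congr rfl fun i hi ↦ by rw [← mul_sum, hP.sum_row i hi, mul_comm]
  have hψ : ∑ j ∈ t, ν j * ψ j = ∑ i ∈ s, ∑ j ∈ t, ψ j * P i j := by
    rw [sum_comm]
    exact sum_congr rfl fun j hj ↦ by rw [← mul_sum, hP.sum_col j hj, mul_comm]
  simp only [hφ, hψ, sub_mul, sum_sub_distrib]

theorem IsTransportPlan.sum_mul_sub_sum_mul_le_cost [PartialOrder R] [IsOrderedRing R]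
    (hP : IsTransportPlan s t μ ν P) {c : ι → κ → R} {φ : ι → R} {ψ : κ → R}
    (hφψ : ∀ i ∈ s, ∀ j ∈ t, φ i - ψ j ≤ c i j) :
    ∑ i ∈ s, μ i * φ i - ∑ j ∈ t, ν j * ψ j ≤ ∑ i ∈ s, ∑ j ∈ t, c i j * P i j := by
  rw [hP.sum_mul_sub_sum_mul]
  exact sum_le_sum fun i hi ↦ sum_le_sum fun j hj ↦
    mul_le_mul_of_nonneg_right (hφψ i hi j hj) (hP.nonneg i hi j hj)

end WeakDuality

theorem exists_forall_sub_le {G ι κ : Type*} [AddCommGroup G] [LinearOrder G]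
    [IsOrderedAddMonoid G] (t : Finset κ) (c : ι → κ → G) :
    ∃ (φ : ι → G) (ψ : κ → G), ∀ i, ∀ j ∈ t, φ i - ψ j ≤ c i j := by
  refine ⟨fun i ↦ -∑ j ∈ t, |c i j|, 0, fun i j hj ↦ ?_⟩
  have : |c i j| ≤ ∑ j ∈ t, |c i j| :=
    single_le_sum (f := fun j ↦ |c i j|) (fun j _ ↦ abs_nonneg _) hj
  simpa using (neg_le_neg this).trans (neg_abs_le _)

section DualFunctionals

variable {R ι κ : Type*} [CommRing R]

/-- The difference `φ i - ψ j` as a functional of the pair of potentials `(φ, ψ)`: the left-hand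
side of the constraint of the dual transport problem at `(i, j)`. -/
def potentialDiff (k : ι × κ) : Module.Dual R ((ι → R) × (κ → R)) :=
  LinearMap.proj k.1 ∘ₗ LinearMap.fst R (ι → R) (κ → R) -
    LinearMap.proj k.2 ∘ₗ LinearMap.snd R (ι → R) (κ → R)

@[simp]
theorem potentialDiff_apply (k : ι × κ) (ξ : (ι → R) × (κ → R)) :
    potentialDiff k ξ = ξ.1 k.1 - ξ.2 k.2 :=
  rfl

/-- The objective `∑ μᵢ φᵢ - ∑ νⱼ ψⱼ` of the dual transport problem, as a functional of the pair of
potentials `(φ, ψ)`. -/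
def kantorovichObjective (s : Finset ι) (t : Finset κ) (μ : ι → R) (ν : κ → R) :
    Module.Dual R ((ι → R) × (κ → R)) :=
  (∑ i ∈ s, μ i • LinearMap.proj i) ∘ₗ LinearMap.fst R _ _ -
    (∑ j ∈ t, ν j • LinearMap.proj j) ∘ₗ LinearMap.snd R _ _

@[simp]
theorem kantorovichObjective_apply (s : Finset ι) (t : Finset κ) (μ : ι → R) (ν : κ → R)
    (ξ : (ι → R) × (κ → R)) :
    kantorovichObjective s t μ ν ξ = ∑ i ∈ s, μ i * ξ.1 i - ∑ j ∈ t, ν j * ξ.2 j := by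
  simp [kantorovichObjective]

theorem isTransportPlan_iff [LE R] {s : Finset ι} {t : Finset κ} {μ : ι → R} {ν : κ → R}
    {P : ι → κ → R} :
    IsTransportPlan s t μ ν P ↔ (∀ k ∈ s ×ˢ t, 0 ≤ P k.1 k.2) ∧
      ∑ k ∈ s ×ˢ t, P k.1 k.2 • potentialDiff k = kantorovichObjective s t μ ν := by
  classical
  constructor
  · intro hP
    refine ⟨fun k hk ↦ hP.nonneg _ (mem_product.1 hk).1 _ (mem_product.1 hk).2,
      LinearMap.ext fun ξ ↦ ?_⟩
    simp [hP.sum_mul_sub_sum_mul, sum_product, mul_comm]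
  · rintro ⟨hP, hsum⟩
    refine ⟨fun i hi j hj ↦ hP (i, j) (mem_product.2 ⟨hi, hj⟩), fun i hi ↦ ?_, fun j hj ↦ ?_⟩
    · simpa [sum_product, Pi.single_apply, hi] using LinearMap.congr_fun hsum (Pi.single i 1, 0)
    · simpa [sum_product, Pi.single_apply, hj] using LinearMap.congr_fun hsum (0, Pi.single j 1)

end DualFunctionals

section StrongDuality

variable {K ι κ : Type*} [Field K] [LinearOrder K] [IsStrictOrderedRing K]
  {s : Finset ι} {t : Finset κ} {μ : ι → K} {ν : κ → K}

theorem isTransportPlan_product (hμ : ∀ i ∈ s, 0 ≤ μ i) (hν : ∀ j ∈ t, 0 ≤ ν j)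
    (hmass : ∑ i ∈ s, μ i = ∑ j ∈ t, ν j) :
    IsTransportPlan s t μ ν fun i j ↦ μ i * ν j / ∑ k ∈ s, μ k where
  nonneg i hi j hj := div_nonneg (mul_nonneg (hμ i hi) (hν j hj)) (sum_nonneg hμ)
  sum_row i hi := by
    rw [← sum_div, ← mul_sum, ← hmass]
    exact mul_div_cancel_of_imp fun h ↦ (sum_eq_zero_iff_of_nonneg hμ).1 h i hi
  sum_col j hj := by
    rw [← sum_div, ← sum_mul, hmass, mul_comm]
    exact mul_div_cancel_of_imp fun h ↦ (sum_eq_zero_iff_of_nonneg hν).1 h j hj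

theorem exists_transportPlan_potentials_cost_eq (c : ι → κ → K) (hμ : ∀ i ∈ s, 0 ≤ μ i)
    (hν : ∀ j ∈ t, 0 ≤ ν j) (hmass : ∑ i ∈ s, μ i = ∑ j ∈ t, ν j) :
    ∃ (φ : ι → K) (ψ : κ → K) (P : ι → κ → K), (∀ i ∈ s, ∀ j ∈ t, φ i - ψ j ≤ c i j) ∧
      IsTransportPlan s t μ ν P ∧
      ∑ i ∈ s, μ i * φ i - ∑ j ∈ t, ν j * ψ j = ∑ i ∈ s, ∑ j ∈ t, c i j * P i j := by
  obtain ⟨φ₀, ψ₀, hφψ₀⟩ := exists_forall_sub_le t c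
  have hproduct := isTransportPlan_iff.1 (isTransportPlan_product hμ hν hmass)
  obtain ⟨⟨φ, ψ⟩, w, hφψ, hw, hsum, heq⟩ :=
    linear_programming_strong_duality (b := fun k : ι × κ ↦ c k.1 k.2)
      ⟨(φ₀, ψ₀), fun k hk ↦ hφψ₀ k.1 k.2 (mem_product.1 hk).2⟩ ⟨_, hproduct⟩
  refine ⟨φ, ψ, fun i j ↦ w (i, j), fun i hi j hj ↦ hφψ (i, j) (mem_product.2 ⟨hi, hj⟩),
    isTransportPlan_iff.2 ⟨hw, hsum⟩, ?_⟩
  simpa [sum_product, mul_comm] using heq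

theorem exists_transportPlan_potential_cost_eq {s t : Finset ι} (hst : Disjoint s t)
    {μ ν : ι → K} (c : ι → ι → K) (hμ : ∀ i ∈ s, 0 ≤ μ i) (hν : ∀ j ∈ t, 0 ≤ ν j)
    (hmass : ∑ i ∈ s, μ i = ∑ j ∈ t, ν j) :
    ∃ (ξ : ι → K) (P : ι → ι → K), (∀ i ∈ s, ∀ j ∈ t, ξ i - ξ j ≤ c i j) ∧
      IsTransportPlan s t μ ν P ∧
      ∑ i ∈ s, μ i * ξ i - ∑ j ∈ t, ν j * ξ j = ∑ i ∈ s, ∑ j ∈ t, c i j * P i j := by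
  classical
  obtain ⟨φ, ψ, P, hφψ, hP, heq⟩ := exists_transportPlan_potentials_cost_eq c hμ hν hmass
  have hφ : ∀ i ∈ s, s.piecewise φ ψ i = φ i := fun i hi ↦ piecewise_eq_of_mem _ _ _ hi
  have hψ : ∀ j ∈ t, s.piecewise φ ψ j = ψ j := fun j hj ↦
    piecewise_eq_of_notMem _ _ _ (disjoint_right.1 hst hj)
  refine ⟨s.piecewise φ ψ, P, fun i hi j hj ↦ ?_, hP, ?_⟩
  · simpa only [hφ i hi, hψ j hj] using hφψ i hi j hj
  · rw [← heq, sum_congr rfl fun i hi ↦ congrArg (μ i * ·) (hφ i hi),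
      sum_congr rfl fun j hj ↦ congrArg (ν j * ·) (hψ j hj)]

end StrongDuality

theorem sum_filter_pos_eq_sum_filter_neg {G ι : Type*} [AddCommGroup G] [LinearOrder G]
    {s : Finset ι} {a : ι → G} (ha : ∑ i ∈ s, a i = 0) :
    ∑ i ∈ s with 0 < a i, a i = ∑ i ∈ s with a i < 0, -a i := by
  refine sub_eq_zero.1 (Eq.trans ?_ ha)
  rw [sum_filter, sum_filter, ← sum_sub_distrib]
  refine sum_congr rfl fun i _ ↦ ?_
  obtain h | h | h := lt_trichotomy (a i) 0 <;> simp [h, h.not_gt]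

theorem discrete_ot_duality_general {K ι : Type*} [Field K] [LinearOrder K]
    [IsStrictOrderedRing K] [Fintype ι] (C : ι → ι → K)
    (a : ι → K) (ha : ∑ i, a i = 0)
    (Np Nm : Finset (ι))
    (hNp : Np = Finset.univ.filter fun i => 0 < a i)
    (hNm : Nm = Finset.univ.filter fun j => a j < 0) :
    ∃ ξ : ι → K, ∃ P : ι → ι → K,
      (∀ i ∈ Np, ∀ j ∈ Nm, ξ i - ξ j ≤ C i j) ∧
      (∀ i ∈ Np, ∀ j ∈ Nm, 0 ≤ P i j) ∧
      (∀ i ∈ Np, ∑ j ∈ Nm, P i j = a i) ∧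
      (∀ j ∈ Nm, ∑ i ∈ Np, P i j = -a j) ∧
      ((∑ i ∈ Np, a i * ξ i + ∑ j ∈ Nm, a j * ξ j) =
        ∑ i ∈ Np, ∑ j ∈ Nm, C i j * P i j) ∧
      (∀ ξ' : ι → K, (∀ i ∈ Np, ∀ j ∈ Nm, ξ' i - ξ' j ≤ C i j) →
        (∑ i ∈ Np, a i * ξ' i + ∑ j ∈ Nm, a j * ξ' j) ≤
          ∑ i ∈ Np, a i * ξ i + ∑ j ∈ Nm, a j * ξ j) ∧
      (∀ P' : ι → ι → K, (∀ i ∈ Np, ∀ j ∈ Nm, 0 ≤ P' i j) →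
        (∀ i ∈ Np, ∑ j ∈ Nm, P' i j = a i) →
        (∀ j ∈ Nm, ∑ i ∈ Np, P' i j = -a j) →
        (∑ i ∈ Np, ∑ j ∈ Nm, C i j * P i j) ≤
          ∑ i ∈ Np, ∑ j ∈ Nm, C i j * P' i j) := by
  have hpos : ∀ i ∈ Np, 0 < a i := by simp [hNp]
  have hneg : ∀ j ∈ Nm, a j < 0 := by simp [hNm]
  have hdisj : Disjoint Np Nm :=
    disjoint_left.2 fun i hi hi' ↦ (hpos i hi).not_gt (hneg i hi')
  have hmass : ∑ i ∈ Np, a i = ∑ j ∈ Nm, -a j := by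
    rw [hNp, hNm, sum_filter_pos_eq_sum_filter_neg ha]
  obtain ⟨ξ, P, hξ, hP, heq⟩ := exists_transportPlan_potential_cost_eq hdisj C
    (fun i hi ↦ (hpos i hi).le) (fun j hj ↦ (neg_pos.2 (hneg j hj)).le) hmass
  have weak (ζ : ι → K) (Q : ι → ι → K) (hζ : ∀ i ∈ Np, ∀ j ∈ Nm, ζ i - ζ j ≤ C i j)
      (hQ : IsTransportPlan Np Nm a (-a ·) Q) :
      ∑ i ∈ Np, a i * ζ i + ∑ j ∈ Nm, a j * ζ j ≤ ∑ i ∈ Np, ∑ j ∈ Nm, C i j * Q i j := by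
    simpa using hQ.sum_mul_sub_sum_mul_le_cost hζ
  have strong : ∑ i ∈ Np, a i * ξ i + ∑ j ∈ Nm, a j * ξ j =
      ∑ i ∈ Np, ∑ j ∈ Nm, C i j * P i j := by
    simpa using heq
  exact ⟨ξ, P, hξ, hP.nonneg, hP.sum_row, hP.sum_col, strong,
    fun ζ hζ ↦ strong ▸ weak ζ P hζ hP,
    fun Q hnonneg hrow hcol ↦ strong ▸ weak ξ Q hξ ⟨hnonneg, hrow, hcol⟩⟩

/-- Discrete optimal transport duality with attainment: for nonnegative costs `C` and a
signed weight vector `a` with zero total mass, with `N⁺ = {i : aᵢ > 0}` and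
`N⁻ = {j : aⱼ < 0}`, there exist a dual (Kantorovich) potential `ξ` and a transport plan
`P`, both feasible, whose objective values agree; `ξ` maximises the dual objective over
all feasible potentials and `P` minimises the transport cost over all feasible plans. -/
theorem discrete_ot_duality
    (N : ℕ) (C : Fin N → Fin N → ℝ) (hC : ∀ i j, 0 ≤ C i j)
    (a : Fin N → ℝ) (ha : ∑ i, a i = 0)
    (Np Nm : Finset (Fin N))
    (hNp : Np = Finset.univ.filter fun i => 0 < a i)
    (hNm : Nm = Finset.univ.filter fun j => a j < 0) :
    ∃ ξ : Fin N → ℝ, ∃ P : Fin N → Fin N → ℝ,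
      (∀ i ∈ Np, ∀ j ∈ Nm, ξ i - ξ j ≤ C i j) ∧
      (∀ i ∈ Np, ∀ j ∈ Nm, 0 ≤ P i j) ∧
      (∀ i ∈ Np, ∑ j ∈ Nm, P i j = a i) ∧
      (∀ j ∈ Nm, ∑ i ∈ Np, P i j = -a j) ∧
      ((∑ i ∈ Np, a i * ξ i + ∑ j ∈ Nm, a j * ξ j) =
        ∑ i ∈ Np, ∑ j ∈ Nm, C i j * P i j) ∧
      (∀ ξ' : Fin N → ℝ, (∀ i ∈ Np, ∀ j ∈ Nm, ξ' i - ξ' j ≤ C i j) →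
        (∑ i ∈ Np, a i * ξ' i + ∑ j ∈ Nm, a j * ξ' j) ≤
          ∑ i ∈ Np, a i * ξ i + ∑ j ∈ Nm, a j * ξ j) ∧
      (∀ P' : Fin N → Fin N → ℝ, (∀ i ∈ Np, ∀ j ∈ Nm, 0 ≤ P' i j) →
        (∀ i ∈ Np, ∑ j ∈ Nm, P' i j = a i) →
        (∀ j ∈ Nm, ∑ i ∈ Np, P' i j = -a j) →
        (∑ i ∈ Np, ∑ j ∈ Nm, C i j * P i j) ≤
          ∑ i ∈ Np, ∑ j ∈ Nm, C i j * P' i j) :=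
  discrete_ot_duality_general C a ha Np Nm hNp hNm
end
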